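/- Let α, β ∈ (0,1), M > 0. Given an i.i.d. sample of size 2n (n ≥ 2) from density f on ℝ^d, split it into (A₁,…,Aₙ) and (Y₁,…,Yₙ); let Āₙ = (1/n)Σ A_i, vₙ = Āₙ/‖Āₙ‖, and Z_i = ⟨Y_i, vₙ⟩ for 1 ≤ i ≤ n, with order statistics Z_(1) ≤ … ≤ Z_(n). Let K_n = {2^j : 0 ≤ j ≤ ⌊log₂(n/2)⌋}, for u ∈ (0,1) let q_{u,k} be the (1−u)-quantile of the (n−k+1)-th order statistic of n i.i.d. standard Gaussian variables, and α_n = sup{u ∈ (0,1) : P₀(∃k ∈ K_n, Z_(n−k+1) > q_{u,k}) ≤ α} computed for i.i.d. standard Gaussians. Define Ψ₂ = sup_{k∈K_n} 1{Z_(n−k+1) > q_{α_n,k}}. Then Ψ₂ is of level α, and there exists a positive constant C(α,β,M) depending only on α, β, M such that P_f(Ψ₂ = 0) ≤ β for every f = f(ε,μ) ∈ F₂[M] satisfying ε‖μ‖ ≥ C(α,β,M)·d^{1/4}·√(ln ln n)/√n and n·ε ≥ C(α,β,M). -/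

import Mathlib

open MeasureTheory Real
open scoped RealInnerProductSpace

noncomputable section

/-- Density of the standard Gaussian distribution `N_d(0_d, I_d)` on `ℝ^d`. -/
def gaussDensity (d : ℕ) (x : EuclideanSpace ℝ (Fin d)) : ℝ :=
  (2 * π) ^ (-(d : ℝ) / 2) * Real.exp (-‖x‖ ^ 2 / 2)

/-- The standard Gaussian measure on `ℝ^d`. -/
def gaussMeasure (d : ℕ) : Measure (EuclideanSpace ℝ (Fin d)) :=
  volume.withDensity fun x => ENNReal.ofReal (gaussDensity d x)

/-- The two-component Gaussian mixture measure with parameters `(ε, μ)`. -/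
def mixMeasure (d : ℕ) (ε : ℝ) (μ : EuclideanSpace ℝ (Fin d)) :
    Measure (EuclideanSpace ℝ (Fin d)) :=
  volume.withDensity fun x =>
    ENNReal.ofReal ((1 - ε) * gaussDensity d x + ε * gaussDensity d (x - μ))

open scoped Classical in
/-- The `k`-th order statistic `Z_(k)` of the sample `z` (1-indexed):
the smallest `t` such that at least `k` of the `zᵢ` are `≤ t`. -/
def orderStat {n : ℕ} (z : Fin n → ℝ) (k : ℕ) : ℝ :=
  sInf {t : ℝ | k ≤ (Finset.univ.filter fun i => z i ≤ t).card}

/-- The set `K_n = {2^j : 0 ≤ j ≤ ⌊log₂(n/2)⌋}`. -/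
def Kset (n : ℕ) : Finset ℕ := (Finset.range (Nat.log 2 (n / 2) + 1)).image (2 ^ ·)

/-- Law of an i.i.d. `n`-sample of standard Gaussian real random variables. -/
def nullPi (n : ℕ) : Measure (Fin n → ℝ) :=
  Measure.pi fun _ : Fin n => ProbabilityTheory.gaussianReal 0 1

/-- `q_{u,k}`, the `(1-u)`-quantile of the order statistic `Z_(n-k+1)` of an i.i.d.
`n`-sample of standard Gaussian variables. -/
def quant (n : ℕ) (u : ℝ) (k : ℕ) : ℝ :=
  sInf {t : ℝ | nullPi n {z | t < orderStat z (n - k + 1)} ≤ ENNReal.ofReal u}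

/-- The corrected level
`α_n = sup{u ∈ (0,1) : P₀(∃ k ∈ K_n, Z_(n-k+1) > q_{u,k}) ≤ α}`. -/
def alphaCorr (n : ℕ) (α : ℝ) : ℝ :=
  sSup {u : ℝ | u ∈ Set.Ioo (0 : ℝ) 1 ∧
    nullPi n {z | ∃ k ∈ Kset n, quant n u k < orderStat z (n - k + 1)} ≤ ENNReal.ofReal α}

/-- The empirical mean `Āₙ` of the first half of the sample. -/
def avg {d n : ℕ} (A : Fin n → EuclideanSpace ℝ (Fin d)) : EuclideanSpace ℝ (Fin d) :=
  (n : ℝ)⁻¹ • ∑ i, A i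

/-- Rejection region of the test `Ψ₂`: given the sample `(A, Y)`, project `Y` onto the
direction `vₙ = Āₙ/‖Āₙ‖` and reject if `Z_(n-k+1) > q_{α_n,k}` for some `k ∈ K_n`. -/
def rejRegion2 (d n : ℕ) (α : ℝ) :
    Set ((Fin n → EuclideanSpace ℝ (Fin d)) × (Fin n → EuclideanSpace ℝ (Fin d))) :=
  {p | ∃ k ∈ Kset n,
    quant n (alphaCorr n α) k <
      orderStat (fun i => ⟪p.2 i, ‖avg p.1‖⁻¹ • avg p.1⟫) (n - k + 1)}

/-- The law of the split sample `(A₁,…,Aₙ,Y₁,…,Yₙ)` of `2n` i.i.d. observations with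
common distribution `P`. -/
def splitLaw {d : ℕ} (n : ℕ) (P : Measure (EuclideanSpace ℝ (Fin d))) :
    Measure ((Fin n → EuclideanSpace ℝ (Fin d)) × (Fin n → EuclideanSpace ℝ (Fin d))) :=
  (Measure.pi fun _ : Fin n => P).prod (Measure.pi fun _ : Fin n => P)

/-!
Conditionally on the first half-sample, the projections `Zᵢ` are i.i.d. standard Gaussian under the
null, so `Ψ₂` inherits the level of the one-dimensional multiple test. As the order statistics have
no atoms, `u ↦ P₀(∃ k, Z_(n-k+1) > q_{u,k})` is `|K_n|`-Lipschitz; hence the supremum defining `α_n`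
is attained, and `α_n ≥ α / |K_n|` by the union bound.

For the power, put `r = ε‖μ‖`. Chebyshev's inequality for `⟨Āₙ, μ⟩` and Markov's inequality for
`‖Āₙ‖²`, whose mean is at most `r‖μ‖ / n + r² + d / n`, show that `ε⟨μ, vₙ⟩` is at least of order
`√(log log n / n)`. Choose `k ∈ K_n` with `n / 4 < k ≤ n / 2`. Hoeffding's inequality bounds the
quantile `q_{α_n,k}` by the Gaussian quantile of order `1 - k / n` up to `O(√(log log n / n))`,
because `log |K_n|` is at most of order `log log n`. There the Gaussian density is bounded below, so
the shift moves enough mass of the projections past the quantile, and a second application of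
Hoeffding's inequality bounds the probability of missing the signal.
-/

section

open ProbabilityTheory Filter Topology

section UpperTail

variable (ν : Measure ℝ) [IsProbabilityMeasure ν]

lemma measureReal_Ioi_eq_one_sub_cdf (t : ℝ) : ν.real (Set.Ioi t) = 1 - cdf ν t := by
  rw [cdf_eq_real, ← Set.compl_Iic, probReal_compl_eq_one_sub measurableSet_Iic]

lemma tendsto_measureReal_Ioi_atTop : Tendsto (fun t => ν.real (Set.Ioi t)) atTop (𝓝 0) := by
  simpa [measureReal_Ioi_eq_one_sub_cdf] using (tendsto_cdf_atTop ν).const_sub 1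

lemma tendsto_measureReal_Ioi_atBot : Tendsto (fun t => ν.real (Set.Ioi t)) atBot (𝓝 1) := by
  simpa [measureReal_Ioi_eq_one_sub_cdf] using (tendsto_cdf_atBot ν).const_sub 1

lemma continuous_measureReal_Ioi [NullSingletonClass ν] :
    Continuous fun t => ν.real (Set.Ioi t) := by
  simp only [measureReal_Ioi_eq_one_sub_cdf]
  refine continuous_const.sub (continuous_iff_continuousAt.2 fun x => ?_)
  rw [(cdf ν).mono.continuousAt_iff_leftLim_eq_rightLim, (cdf ν).rightLim_eq]
  have jump_eq_zero := (cdf ν).measure_singleton x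
  rw [measure_cdf, measure_singleton, eq_comm, ENNReal.ofReal_eq_zero] at jump_eq_zero
  exact le_antisymm ((cdf ν).mono.leftLim_le le_rfl) (by linarith)

lemma exists_forall_abs_le_of_measureReal_Ioi_mem_Icc {a b : ℝ} (ha : 0 < a) (hb : b < 1) :
    ∃ T, ∀ t, ν.real (Set.Ioi t) ∈ Set.Icc a b → |t| ≤ T := by
  obtain ⟨r, hr⟩ := ((tendsto_measureReal_Ioi_atTop ν).eventually (gt_mem_nhds ha)).exists
  obtain ⟨l, hl⟩ := ((tendsto_measureReal_Ioi_atBot ν).eventually (lt_mem_nhds hb)).exists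
  refine ⟨max r (-l), fun t ⟨hat, htb⟩ => abs_le'.2 ⟨le_max_of_le_left ?_, le_max_of_le_right ?_⟩⟩
  · exact le_of_not_gt fun h =>
      (hat.trans (measureReal_mono (Set.Ioi_subset_Ioi h.le))).not_gt hr
  · exact neg_le_neg (le_of_not_gt fun h =>
      ((measureReal_mono (Set.Ioi_subset_Ioi h.le)).trans htb).not_gt hl)

lemma bddBelow_setOf_measureReal_Ioi_le {u : ℝ} (hu : u < 1) :
    BddBelow {t | ν.real (Set.Ioi t) ≤ u} := by
  obtain ⟨b, hb⟩ := ((tendsto_measureReal_Ioi_atBot ν).eventually (lt_mem_nhds hu)).exists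
  exact ⟨b, fun t ht => le_of_not_gt fun htb =>
    ((measureReal_mono (Set.Ioi_subset_Ioi htb.le)).trans ht).not_gt hb⟩

end UpperTail

section UpperQuantile

variable {Ω : Type*} [MeasurableSpace Ω]

/-- The `(1 - u)`-quantile of the random variable `X` under `P`, written with upper tails: the
infimum of the levels that `X` exceeds with probability at most `u`. -/
def upperQuantile (P : Measure Ω) (X : Ω → ℝ) (u : ℝ) : ℝ :=
  sInf {t : ℝ | P {ω | t < X ω} ≤ ENNReal.ofReal u}

variable {P : Measure Ω} [IsProbabilityMeasure P] {X : Ω → ℝ} {u v t : ℝ}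

lemma upperQuantile_eq_sInf_map (hX : Measurable X) (hu : 0 ≤ u) :
    upperQuantile P X u = sInf {t | (P.map X).real (Set.Ioi t) ≤ u} := by
  unfold upperQuantile
  congr with t
  rw [map_measureReal_apply hX measurableSet_Ioi,
    ENNReal.le_ofReal_iff_toReal_le (measure_ne_top _ _) hu]
  rfl

lemma upperQuantile_le (hX : Measurable X) (hu₀ : 0 ≤ u) (hu₁ : u < 1)
    (ht : P.real {ω | t < X ω} ≤ u) : upperQuantile P X u ≤ t := by
  have := Measure.isProbabilityMeasure_map (μ := P) hX.aemeasurable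
  rw [upperQuantile_eq_sInf_map hX hu₀]
  refine csInf_le (bddBelow_setOf_measureReal_Ioi_le _ hu₁) ?_
  rwa [Set.mem_ofPred_eq, map_measureReal_apply hX measurableSet_Ioi]

lemma measureReal_upperQuantile_lt (hX : Measurable X) [NullSingletonClass (P.map X)]
    (hu : u ∈ Set.Ioo (0 : ℝ) 1) : P.real {ω | upperQuantile P X u < X ω} = u := by
  have := Measure.isProbabilityMeasure_map (μ := P) hX.aemeasurable
  set S : Set ℝ := {t | (P.map X).real (Set.Ioi t) ≤ u}
  have tail_cont := continuous_measureReal_Ioi (P.map X)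
  have bdd : BddBelow S := bddBelow_setOf_measureReal_Ioi_le _ hu.2
  have nonempty : S.Nonempty :=
    ((tendsto_measureReal_Ioi_atTop _).eventually (gt_mem_nhds hu.1)).exists.imp fun _ h => h.le
  have closed : IsClosed S := isClosed_le tail_cont continuous_const
  suffices tail_eq : (P.map X).real (Set.Ioi (sInf S)) = u by
    rw [map_measureReal_apply hX measurableSet_Ioi] at tail_eq
    rwa [upperQuantile_eq_sInf_map hX hu.1.le]
  refine le_antisymm (closed.csInf_mem nonempty bdd) ?_
  refine ge_of_tendsto (tail_cont.continuousWithinAt (s := Set.Iio (sInf S))) ?_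
  filter_upwards [self_mem_nhdsWithin] with t ht
  exact le_of_not_ge fun h => (csInf_le bdd h).not_gt ht

lemma upperQuantile_anti (hX : Measurable X) [NullSingletonClass (P.map X)]
    (hu : u ∈ Set.Ioo (0 : ℝ) 1) (hv : v ∈ Set.Ioo (0 : ℝ) 1) (huv : u ≤ v) :
    upperQuantile P X v ≤ upperQuantile P X u :=
  upperQuantile_le hX hv.1.le hv.2 ((measureReal_upperQuantile_lt hX hu).trans_le huv)

end UpperQuantile

section MultipleTest

variable {Ω ι : Type*} [MeasurableSpace Ω]

/-- The rejection region of the test that rejects when one of the statistics `T k`, `k ∈ K`,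
exceeds its own `(1 - u)`-quantile under `P`. -/
def multipleRejection (P : Measure Ω) (T : ι → Ω → ℝ) (K : Finset ι) (u : ℝ) : Set Ω :=
  {ω | ∃ k ∈ K, upperQuantile P (T k) u < T k ω}

/-- The largest individual level for which the test combining the statistics `T k`, `k ∈ K`,
has level `α` under `P`. -/
def correctedLevel (P : Measure Ω) (T : ι → Ω → ℝ) (K : Finset ι) (α : ℝ) : ℝ :=
  sSup {u : ℝ | u ∈ Set.Ioo (0 : ℝ) 1 ∧ P (multipleRejection P T K u) ≤ ENNReal.ofReal α}

variable {P : Measure Ω} {T : ι → Ω → ℝ} {K : Finset ι} {α u v : ℝ}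

lemma multipleRejection_eq_biUnion :
    multipleRejection P T K u = ⋃ k ∈ K, {ω | upperQuantile P (T k) u < T k ω} := by
  ext; simp [multipleRejection]

lemma measurableSet_multipleRejection (hT : ∀ k ∈ K, Measurable (T k)) :
    MeasurableSet (multipleRejection P T K u) := by
  rw [multipleRejection_eq_biUnion]
  exact K.measurableSet_biUnion fun k hk => hT k hk measurableSet_Ioi

variable [IsProbabilityMeasure P]

lemma measureReal_multipleRejection_le (hT : ∀ k ∈ K, Measurable (T k))
    (hP : ∀ k ∈ K, NullSingletonClass (P.map (T k))) (hu : u ∈ Set.Ioo (0 : ℝ) 1) :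
    P.real (multipleRejection P T K u) ≤ K.card * u := by
  rw [multipleRejection_eq_biUnion, ← nsmul_eq_mul]
  refine (measureReal_biUnion_finset_le _ _).trans (K.sum_le_card_nsmul _ _ fun k hk => ?_)
  have := hP k hk
  exact (measureReal_upperQuantile_lt (hT k hk) hu).le

lemma le_measureReal_multipleRejection (hT : ∀ k ∈ K, Measurable (T k))
    (hP : ∀ k ∈ K, NullSingletonClass (P.map (T k))) (hK : K.Nonempty)
    (hu : u ∈ Set.Ioo (0 : ℝ) 1) : u ≤ P.real (multipleRejection P T K u) := by
  obtain ⟨k, hk⟩ := hK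
  have := hP k hk
  calc u = P.real {ω | upperQuantile P (T k) u < T k ω} :=
        (measureReal_upperQuantile_lt (hT k hk) hu).symm
    _ ≤ P.real (multipleRejection P T K u) := measureReal_mono fun ω hω => ⟨k, hk, hω⟩

lemma measureReal_multipleRejection_le_add (hT : ∀ k ∈ K, Measurable (T k))
    (hP : ∀ k ∈ K, NullSingletonClass (P.map (T k))) (hu : u ∈ Set.Ioo (0 : ℝ) 1)
    (hv : v ∈ Set.Ioo (0 : ℝ) 1) (huv : u ≤ v) :
    P.real (multipleRejection P T K v) ≤
      P.real (multipleRejection P T K u) + K.card * (v - u) := by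
  set E : ℝ → ι → Set Ω := fun w k => {ω | upperQuantile P (T k) w < T k ω}
  have gain (k : ι) (hk : k ∈ K) : P.real (E v k \ E u k) ≤ v - u := by
    have := hP k hk
    have nested : E u k ⊆ E v k := fun ω hω => (upperQuantile_anti (hT k hk) hu hv huv).trans_lt hω
    rw [measureReal_sdiff nested (hT k hk measurableSet_Ioi),
      measureReal_upperQuantile_lt (hT k hk) hu, measureReal_upperQuantile_lt (hT k hk) hv]
  calc P.real (multipleRejection P T K v)
      ≤ P.real (multipleRejection P T K u ∪ ⋃ k ∈ K, (E v k \ E u k)) := by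
        refine measureReal_mono ?_
        rintro ω ⟨k, hk, hω⟩
        by_cases h : ω ∈ E u k
        · exact Or.inl ⟨k, hk, h⟩
        · exact Or.inr (Set.mem_biUnion hk ⟨hω, h⟩)
    _ ≤ P.real (multipleRejection P T K u) + ∑ k ∈ K, P.real (E v k \ E u k) :=
        (measureReal_union_le _ _).trans (by gcongr; exact measureReal_biUnion_finset_le _ _)
    _ ≤ P.real (multipleRejection P T K u) + K.card * (v - u) := by
        rw [← nsmul_eq_mul]
        gcongr
        exact K.sum_le_card_nsmul _ _ gain

lemma div_card_le_correctedLevel (hT : ∀ k ∈ K, Measurable (T k))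
    (hP : ∀ k ∈ K, NullSingletonClass (P.map (T k))) (hK : K.Nonempty)
    (hα : α ∈ Set.Ioo (0 : ℝ) 1) : α / K.card ≤ correctedLevel P T K α := by
  have one_le_card : (1 : ℝ) ≤ K.card := by exact_mod_cast hK.card_pos
  have hu : α / K.card ∈ Set.Ioo (0 : ℝ) 1 :=
    ⟨div_pos hα.1 (by linarith), (div_le_self hα.1.le one_le_card).trans_lt hα.2⟩
  refine le_csSup ⟨1, fun u hu => hu.1.2.le⟩ ⟨hu, ?_⟩
  rw [ENNReal.le_ofReal_iff_toReal_le (measure_ne_top _ _) hα.1.le]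
  exact (measureReal_multipleRejection_le hT hP hu).trans_eq (by field_simp)

lemma correctedLevel_le (hT : ∀ k ∈ K, Measurable (T k))
    (hP : ∀ k ∈ K, NullSingletonClass (P.map (T k))) (hK : K.Nonempty) (hα : 0 ≤ α) :
    correctedLevel P T K α ≤ α :=
  Real.sSup_le (fun _ ⟨hu, hle⟩ => (le_measureReal_multipleRejection hT hP hK hu).trans
    (ENNReal.toReal_le_of_le_ofReal hα hle)) hα

lemma correctedLevel_mem_Ioo (hT : ∀ k ∈ K, Measurable (T k))
    (hP : ∀ k ∈ K, NullSingletonClass (P.map (T k))) (hK : K.Nonempty)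
    (hα : α ∈ Set.Ioo (0 : ℝ) 1) : correctedLevel P T K α ∈ Set.Ioo (0 : ℝ) 1 :=
  ⟨(div_pos hα.1 (by exact_mod_cast hK.card_pos)).trans_le
    (div_card_le_correctedLevel hT hP hK hα), (correctedLevel_le hT hP hK hα.1.le).trans_lt hα.2⟩

-- The supremum defining `correctedLevel` is attained because `u ↦ P (multipleRejection P T K u)` is
-- `#K`-Lipschitz: an excess over `α` at the supremum would bound all admissible `u` away from it.
lemma measure_multipleRejection_correctedLevel_le (hT : ∀ k ∈ K, Measurable (T k))
    (hP : ∀ k ∈ K, NullSingletonClass (P.map (T k))) (hK : K.Nonempty)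
    (hα : α ∈ Set.Ioo (0 : ℝ) 1) :
    P (multipleRejection P T K (correctedLevel P T K α)) ≤ ENNReal.ofReal α := by
  set a := correctedLevel P T K α
  have ha : a ∈ Set.Ioo (0 : ℝ) 1 := correctedLevel_mem_Ioo hT hP hK hα
  have card_pos : (0 : ℝ) < K.card := by exact_mod_cast hK.card_pos
  set excess := P.real (multipleRejection P T K a) - α
  suffices a ≤ a - excess / K.card by
    rw [ENNReal.le_ofReal_iff_toReal_le (measure_ne_top _ _) hα.1.le]
    have := nonpos_of_mul_nonpos_left (a := excess) (b := (K.card : ℝ)⁻¹)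
      (by rw [← div_eq_mul_inv]; linarith) (by positivity)
    exact sub_nonpos.1 this
  refine csSup_le (Set.nonempty_iff_ne_empty.2 fun h => ?_) fun u ⟨hu, hle⟩ => ?_
  · exact ha.1.ne' ((congrArg sSup h).trans Real.sSup_empty)
  · have hua : u ≤ a := le_csSup ⟨1, fun w hw => hw.1.2.le⟩ ⟨hu, hle⟩
    have lipschitz := measureReal_multipleRejection_le_add hT hP hu ha hua
    have admissible : P.real (multipleRejection P T K u) ≤ α :=
      ENNReal.toReal_le_of_le_ofReal hα.1.le hle
    rw [le_sub_comm, div_le_iff₀' card_pos]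
    linarith

end MultipleTest

section OrderStat

variable {n j k : ℕ}

lemma exists_isLeast_setOf_le_card_filter_le (z : Fin n → ℝ) (hj : 1 ≤ j) (hjn : j ≤ n) :
    ∃ i, IsLeast {t | j ≤ (Finset.univ.filter fun l => z l ≤ t).card} (z i) := by
  set S : Set ℝ := {t | j ≤ (Finset.univ.filter fun l => z l ≤ t).card}
  have exists_le_of_mem {t : ℝ} (ht : t ∈ S) : ∃ i, z i ∈ S ∧ z i ≤ t := by
    obtain ⟨i, hi, hmax⟩ := Finset.exists_max_image _ z (Finset.card_pos.1 (hj.trans ht))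
    exact ⟨i, ht.trans (Finset.card_le_card fun l hl => by simpa using hmax l hl),
      by simpa using hi⟩
  obtain ⟨b, hb⟩ := (Set.finite_range z).bddAbove
  have hbS : b ∈ S := by
    have : (Finset.univ.filter fun l => z l ≤ b) = Finset.univ :=
      Finset.filter_true_of_mem fun l _ => hb ⟨l, rfl⟩
    simpa [S, this] using hjn
  obtain ⟨i₀, hi₀, -⟩ := exists_le_of_mem hbS
  obtain ⟨i, hi, hmin⟩ :=
    Set.exists_min_image {i | z i ∈ S} z (Set.toFinite _) ⟨i₀, hi₀⟩
  refine ⟨i, hi, fun t ht => ?_⟩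
  obtain ⟨l, hl, hlt⟩ := exists_le_of_mem ht
  exact (hmin l hl).trans hlt

lemma isLeast_orderStat (z : Fin n → ℝ) (hj : 1 ≤ j) (hjn : j ≤ n) :
    IsLeast {t | j ≤ (Finset.univ.filter fun l => z l ≤ t).card} (orderStat z j) := by
  obtain ⟨i, hi⟩ := exists_isLeast_setOf_le_card_filter_le z hj hjn
  have : orderStat z j = z i := by unfold orderStat; convert hi.csInf_eq
  rwa [this]

lemma exists_orderStat_eq (z : Fin n → ℝ) (hj : 1 ≤ j) (hjn : j ≤ n) :
    ∃ i, orderStat z j = z i := by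
  obtain ⟨i, hi⟩ := exists_isLeast_setOf_le_card_filter_le z hj hjn
  exact ⟨i, (isLeast_orderStat z hj hjn).unique hi⟩

lemma orderStat_le_iff (z : Fin n → ℝ) (hj : 1 ≤ j) (hjn : j ≤ n) (t : ℝ) :
    orderStat z j ≤ t ↔ j ≤ (Finset.univ.filter fun i => z i ≤ t).card := by
  have least := isLeast_orderStat z hj hjn
  exact ⟨fun h => least.1.trans (Finset.card_le_card fun i hi => by
    simp only [Finset.mem_filter_univ] at hi ⊢; exact hi.trans h), fun h => least.2 h⟩

lemma lt_orderStat_sub_iff (z : Fin n → ℝ) (hk : 1 ≤ k) (hkn : k ≤ n) (t : ℝ) :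
    t < orderStat z (n - k + 1) ↔ k ≤ (Finset.univ.filter fun i => t < z i).card := by
  rw [← not_le, orderStat_le_iff z (by omega) (by omega)]
  have h := Finset.card_filter_add_card_filter_not (s := (Finset.univ : Finset (Fin n)))
    (fun i => z i ≤ t)
  simp only [not_le, Finset.card_univ, Fintype.card_fin] at h ⊢
  omega

lemma measurable_orderStat (hj : 1 ≤ j) (hjn : j ≤ n) :
    Measurable fun z : Fin n → ℝ => orderStat z j := by
  refine measurable_of_Iic fun t => ?_
  have : (fun z : Fin n → ℝ => orderStat z j) ⁻¹' Set.Iic t =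
      (fun z => ∑ i, if z i ≤ t then 1 else 0) ⁻¹' Set.Ici j := by
    ext z
    simp [orderStat_le_iff z hj hjn]
  rw [this]
  refine Finset.measurable_sum _ (fun i _ => ?_) measurableSet_Ici
  exact Measurable.ite (measurableSet_le (measurable_pi_apply i) measurable_const)
    measurable_const measurable_const

lemma nullSingletonClass_map_orderStat (ν : Measure ℝ) [IsProbabilityMeasure ν]
    [NullSingletonClass ν] (hj : 1 ≤ j) (hjn : j ≤ n) :
    NullSingletonClass ((Measure.pi fun _ : Fin n => ν).map fun z => orderStat z j) := by
  refine ⟨fun x => ?_⟩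
  rw [Measure.map_apply (measurable_orderStat hj hjn) (measurableSet_singleton x)]
  refine measure_mono_null (t := ⋃ i, Function.eval i ⁻¹' {x}) (fun z hz => ?_)
    (measure_iUnion_null fun i => ?_)
  · obtain ⟨i, hi⟩ := exists_orderStat_eq z hj hjn
    exact Set.mem_iUnion.2 ⟨i, hi.symm.trans hz⟩
  · exact ((measurePreserving_eval (fun _ : Fin n => ν) i).measure_preimage
      (measurableSet_singleton x).nullMeasurableSet).trans (measure_singleton x)

end OrderStat

section Kset

variable {n k : ℕ}

lemma mem_Kset_iff : k ∈ Kset n ↔ ∃ i ≤ Nat.log 2 (n / 2), 2 ^ i = k := by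
  simp [Kset]

lemma one_le_of_mem_Kset (hk : k ∈ Kset n) : 1 ≤ k := by
  obtain ⟨i, -, rfl⟩ := mem_Kset_iff.1 hk
  exact Nat.one_le_two_pow

lemma two_mul_le_of_mem_Kset (hn : 2 ≤ n) (hk : k ∈ Kset n) : 2 * k ≤ n := by
  obtain ⟨i, hi, rfl⟩ := mem_Kset_iff.1 hk
  have : 2 ^ i ≤ n / 2 := Nat.pow_le_of_le_log (by omega) hi
  omega

lemma Kset_nonempty (n : ℕ) : (Kset n).Nonempty :=
  ⟨1, mem_Kset_iff.2 ⟨0, Nat.zero_le _, rfl⟩⟩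

lemma card_Kset (n : ℕ) : (Kset n).card = Nat.log 2 (n / 2) + 1 := by
  rw [Kset, Finset.card_image_of_injective _ (Nat.pow_right_injective le_rfl), Finset.card_range]

lemma card_Kset_le_two_mul_log (hn : 2 ≤ n) : ((Kset n).card : ℝ) ≤ 2 * log n := by
  have card_eq : (Kset n).card = Nat.log 2 n := by
    rw [card_Kset, Nat.log_div_base, Nat.sub_add_cancel (Nat.log_pos one_lt_two hn)]
  have logb_le := Real.natLog_le_logb n 2
  rw [Real.logb, Nat.cast_ofNat, le_div_iff₀ (by positivity)] at logb_le
  rw [card_eq]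
  nlinarith [Real.log_two_gt_d9, (Nat.log 2 n).cast_nonneg (α := ℝ)]

lemma exists_mem_Kset_quarter_lt (n : ℕ) : ∃ k ∈ Kset n, n < 4 * k := by
  refine ⟨2 ^ Nat.log 2 (n / 2), mem_Kset_iff.2 ⟨_, le_rfl, rfl⟩, ?_⟩
  have : n / 2 < 2 ^ (Nat.log 2 (n / 2) + 1) := Nat.lt_pow_succ_log_self one_lt_two _
  rw [pow_succ] at this
  omega

end Kset

section Sample

variable {Ω : Type*} [MeasurableSpace Ω] (P : Measure Ω) [IsProbabilityMeasure P] {n : ℕ}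

lemma pi_real_card_filter_ge_le {p : Ω → Prop} [DecidablePred p] (hp : MeasurableSet {x | p x})
    {s : ℝ} (hs : 0 ≤ s) (hn : n ≠ 0) :
    (Measure.pi fun _ : Fin n => P).real
        {y | n * (P.real {x | p x} + s) ≤ (Finset.univ.filter fun i => p (y i)).card} ≤
      exp (-2 * n * s ^ 2) := by
  set Q := Measure.pi fun _ : Fin n => P
  set X : Ω → ℝ := fun x => if p x then 1 else 0 with hX
  have hXm : Measurable X := Measurable.ite hp measurable_const measurable_const
  have mean (i : Fin n) : ∫ y, X (y i) ∂Q = P.real {x | p x} := by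
    rw [← integral_indicator_one hp, integral_comp_eval hXm.aestronglyMeasurable]
    exact integral_congr_ae (ae_of_all _ fun x => by by_cases h : p x <;> simp [hX, h])
  have subgaussian (i : Fin n) : HasSubgaussianMGF
      (fun y : Fin n → Ω => X (y i) - P.real {x | p x}) ((‖(1 : ℝ) - 0‖₊ / 2) ^ 2) Q := by
    rw [← mean i]
    exact hasSubgaussianMGF_of_mem_Icc (hXm.comp (measurable_pi_apply i)).aemeasurable
      (ae_of_all _ fun y => by by_cases h : p (y i) <;> simp [hX, h])
  have indep : iIndepFun (fun (i : Fin n) (y : Fin n → Ω) => X (y i) - P.real {x | p x}) Q :=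
    iIndepFun_pi (X := fun _ x => X x - P.real {x | p x}) fun _ => (hXm.sub_const _).aemeasurable
  have hoeffding := HasSubgaussianMGF.measure_sum_ge_le_of_iIndepFun indep
    (s := Finset.univ) (fun i _ => subgaussian i) (ε := n * s) (by positivity)
  refine (congrArg Q.real ?_).trans_le (hoeffding.trans_eq (congrArg exp ?_))
  · ext y
    have : ∑ i, (X (y i) - P.real {x | p x}) =
        (Finset.univ.filter fun i => p (y i)).card - n * P.real {x | p x} := by simp [hX]
    simp only [Set.mem_ofPred_eq, this, le_sub_iff_add_le', mul_add]
  · have : (n : ℝ) ≠ 0 := by positivity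
    simp
    field_simp

section RealSample

variable (ν : Measure ℝ) [IsProbabilityMeasure ν] {k : ℕ} {s t : ℝ}

lemma pi_real_lt_orderStat_le (hk : 1 ≤ k) (hkn : k ≤ n) (hs : 0 ≤ s)
    (ht : n * (ν.real (Set.Ioi t) + s) ≤ k) :
    (Measure.pi fun _ : Fin n => ν).real {z | t < orderStat z (n - k + 1)} ≤
      exp (-2 * n * s ^ 2) := by
  refine le_trans (measureReal_mono fun z hz => ?_)
    (pi_real_card_filter_ge_le ν (p := fun x => t < x) measurableSet_Ioi hs (by omega))
  exact ht.trans (by exact_mod_cast (lt_orderStat_sub_iff z hk hkn t).1 hz)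

lemma pi_real_orderStat_le_le (hk : 1 ≤ k) (hkn : k ≤ n) (hs : 0 ≤ s)
    (ht : k + n * s ≤ n * ν.real (Set.Ioi t)) :
    (Measure.pi fun _ : Fin n => ν).real {z | orderStat z (n - k + 1) ≤ t} ≤
      exp (-2 * n * s ^ 2) := by
  refine le_trans (measureReal_mono fun z hz => ?_)
    (pi_real_card_filter_ge_le ν (p := fun x => x ≤ t) measurableSet_Iic hs (by omega))
  have count : ((n - k + 1 : ℕ) : ℝ) ≤ (Finset.univ.filter fun i => z i ≤ t).card := by
    exact_mod_cast (orderStat_le_iff z (by omega) (by omega) t).1 hz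
  push_cast [Nat.cast_sub hkn] at count
  have tail : ν.real {x | x ≤ t} = 1 - ν.real (Set.Ioi t) := by
    rw [← probReal_compl_eq_one_sub measurableSet_Ioi, Set.compl_Ioi]; rfl
  rw [Set.mem_ofPred_eq, tail]
  linarith

end RealSample

variable {P} {X : Ω → ℝ}

lemma memLp_pi_mean (hX : MemLp X 2 P) :
    MemLp (fun A : Fin n → Ω => (n : ℝ)⁻¹ * ∑ i, X (A i)) 2 (Measure.pi fun _ : Fin n => P) :=
  (memLp_finsetSum _ fun i _ => hX.comp_measurePreserving
    (measurePreserving_eval (fun _ : Fin n => P) i)).const_mul _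

lemma integral_pi_mean (hX : Integrable X P) (hn : n ≠ 0) :
    ∫ A, (n : ℝ)⁻¹ * ∑ i, X (A i) ∂(Measure.pi fun _ : Fin n => P) = ∫ x, X x ∂P := by
  have integral_eval (i : Fin n) :
      ∫ A, X (A i) ∂(Measure.pi fun _ : Fin n => P) = ∫ x, X x ∂P :=
    integral_comp_eval (μ := fun _ : Fin n => P) hX.aestronglyMeasurable
  have integrable_eval (i : Fin n) :
      Integrable (fun A : Fin n → Ω => X (A i)) (Measure.pi fun _ => P) :=
    (measurePreserving_eval (fun _ : Fin n => P) i).integrable_comp_of_integrable hX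
  rw [integral_const_mul, integral_finsetSum _ fun i _ => integrable_eval i]
  simp [integral_eval, hn]

lemma variance_pi_mean (hX : MemLp X 2 P) :
    Var[fun A : Fin n → Ω => (n : ℝ)⁻¹ * ∑ i, X (A i); Measure.pi fun _ : Fin n => P] =
      Var[X; P] / n := by
  have variance_sum := variance_sum_pi (μ := fun _ : Fin n => P) (X := fun _ => X) fun _ => hX
  rw [variance_const_mul, ← Finset.sum_fn, variance_sum]
  rcases eq_or_ne (n : ℝ) 0 with hn | hn
  · simp [hn]
  · simp
    field_simp

lemma integral_sq_pi_mean (hX : MemLp X 2 P) (hn : n ≠ 0) :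
    ∫ A, ((n : ℝ)⁻¹ * ∑ i, X (A i)) ^ 2 ∂(Measure.pi fun _ : Fin n => P) =
      (∫ x, X x ∂P) ^ 2 + Var[X; P] / n := by
  have h := variance_eq_sub (memLp_pi_mean (n := n) hX)
  rw [variance_pi_mean hX, integral_pi_mean (hX.integrable one_le_two) hn] at h
  simp only [Pi.pow_apply] at h
  linarith

lemma pi_real_mean_le_sub_le (hX : MemLp X 2 P) (hn : n ≠ 0) {c : ℝ} (hc : 0 < c) :
    (Measure.pi fun _ : Fin n => P).real
        {A | (n : ℝ)⁻¹ * ∑ i, X (A i) ≤ ∫ x, X x ∂P - c} ≤ Var[X; P] / (n * c ^ 2) := by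
  have chebyshev := meas_ge_le_variance_div_sq (memLp_pi_mean (n := n) hX) hc
  rw [integral_pi_mean (hX.integrable one_le_two) hn, variance_pi_mean hX, div_div] at chebyshev
  refine ENNReal.toReal_le_of_le_ofReal (div_nonneg (variance_nonneg _ _) (by positivity))
    (le_trans (measure_mono fun A hA => ?_) chebyshev)
  rw [Set.mem_ofPred_eq] at hA ⊢
  exact le_abs.2 (Or.inr (by linarith))

section Avg

variable {d : ℕ}

lemma measurable_avg : Measurable (avg : (Fin n → EuclideanSpace ℝ (Fin d)) → _) := by
  unfold avg; fun_prop

lemma inner_avg (A : Fin n → EuclideanSpace ℝ (Fin d)) (w : EuclideanSpace ℝ (Fin d)) :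
    ⟪avg A, w⟫ = (n : ℝ)⁻¹ * ∑ i, ⟪A i, w⟫ := by
  simp [avg, real_inner_smul_left, sum_inner]

variable {P : Measure (EuclideanSpace ℝ (Fin d))} [IsProbabilityMeasure P]

lemma memLp_pi_avg (hP : MemLp id 2 P) :
    MemLp (avg : (Fin n → EuclideanSpace ℝ (Fin d)) → _) 2 (Measure.pi fun _ : Fin n => P) :=
  MemLp.const_smul (f := fun A : Fin n → EuclideanSpace ℝ (Fin d) => ∑ i, A i)
    (memLp_finsetSum _ fun i _ => hP.comp_measurePreserving
      (measurePreserving_eval (fun _ : Fin n => P) i)) (n : ℝ)⁻¹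

lemma integral_norm_sq_pi_avg_le (hP : MemLp id 2 P) (hn : n ≠ 0) :
    ∫ A, ‖avg A‖ ^ 2 ∂(Measure.pi fun _ : Fin n => P) ≤
      ‖∫ x, x ∂P‖ ^ 2 + (∫ x, ‖x‖ ^ 2 ∂P) / n := by
  have coord (j : Fin d) : MemLp (fun x : EuclideanSpace ℝ (Fin d) => x j) 2 P :=
    (EuclideanSpace.proj (𝕜 := ℝ) j).comp_memLp' hP
  have avg_coord (A : Fin n → EuclideanSpace ℝ (Fin d)) (j : Fin d) :
      avg A j = (n : ℝ)⁻¹ * ∑ i, A i j := by simp [avg]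
  have mean_coord (j : Fin d) : (∫ x, x ∂P) j = ∫ x, x j ∂P :=
    ((EuclideanSpace.proj (𝕜 := ℝ) j).integral_comp_comm (hP.integrable one_le_two)).symm
  simp only [EuclideanSpace.real_norm_sq_eq, avg_coord, mean_coord]
  rw [integral_finsetSum _ fun j _ => (memLp_pi_mean (coord j)).integrable_sq,
    integral_finsetSum _ fun j _ => (coord j).integrable_sq, Finset.sum_div,
    ← Finset.sum_add_distrib]
  refine Finset.sum_le_sum fun j _ => ?_
  rw [integral_sq_pi_mean (coord j) hn]
  gcongr
  exact variance_le_expectation_sq (coord j).aestronglyMeasurable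

lemma pi_real_norm_sq_avg_ge_le (hP : MemLp id 2 P) (hn : n ≠ 0) {c : ℝ} (hc : 0 < c) :
    (Measure.pi fun _ : Fin n => P).real {A | c ≤ ‖avg A‖ ^ 2} ≤
      (‖∫ x, x ∂P‖ ^ 2 + (∫ x, ‖x‖ ^ 2 ∂P) / n) / c := by
  have markov := mul_meas_ge_le_integral_of_nonneg (ae_of_all _ fun A => sq_nonneg ‖avg A‖)
    ((memLp_two_iff_integrable_sq_norm (memLp_pi_avg hP).aestronglyMeasurable).1
      (memLp_pi_avg (n := n) hP)) c
  rw [le_div_iff₀' hc]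
  exact markov.trans (integral_norm_sq_pi_avg_le hP hn)

end Avg

lemma pi_sum_eq_null {E : Type*} [AddCommGroup E] [MeasurableSpace E] [MeasurableAdd₂ E]
    [MeasurableSingletonClass E] (P : Measure E) [IsProbabilityMeasure P]
    [NullSingletonClass P] (hn : n ≠ 0) (a : E) :
    (Measure.pi fun _ : Fin n => P) {A | ∑ i, A i = a} = 0 := by
  obtain ⟨m, rfl⟩ := Nat.exists_eq_succ_of_ne_zero hn
  have split := measurePreserving_piFinSuccAbove (fun _ : Fin (m + 1) => P) 0
  have hS : MeasurableSet {p : E × (Fin m → E) | p.1 + ∑ i, p.2 i = a} :=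
    measurable_fst.add (Finset.measurable_sum _ fun i _ =>
      (measurable_pi_apply i).comp measurable_snd) (measurableSet_singleton a)
  have preimage_eq : {A : Fin (m + 1) → E | ∑ i, A i = a} =
      MeasurableEquiv.piFinSuccAbove (fun _ => E) 0 ⁻¹' {p | p.1 + ∑ i, p.2 i = a} := by
    ext A
    simp [Fin.sum_univ_succ, MeasurableEquiv.piFinSuccAbove, Fin.tail]
  rw [preimage_eq, split.measure_preimage hS.nullMeasurableSet, Measure.prod_apply_symm hS]
  have section_eq (y : Fin m → E) :
      (fun x => (x, y)) ⁻¹' {p : E × (Fin m → E) | p.1 + ∑ i, p.2 i = a} = {a - ∑ i, y i} := by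
    ext x
    simp [eq_sub_iff_add_eq]
  simp [section_eq]

end Sample

section GaussMeasure

variable (d : ℕ)

lemma gaussDensity_nonneg (x : EuclideanSpace ℝ (Fin d)) : 0 ≤ gaussDensity d x := by
  unfold gaussDensity; positivity

lemma continuous_gaussDensity : Continuous (gaussDensity d) := by
  unfold gaussDensity; fun_prop

lemma integrable_gaussDensity : Integrable (gaussDensity d) := by
  have h := (GaussianFourier.integrable_cexp_neg_mul_sq_norm_add (b := 1 / 2)
    (V := EuclideanSpace ℝ (Fin d)) (by norm_num) 0 0).norm
  refine (h.congr (ae_of_all _ fun x => ?_)).const_mul _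
  simp only [Complex.norm_exp]
  congr 1
  norm_cast
  simp
  norm_cast
  ring

instance isFiniteMeasure_gaussMeasure : IsFiniteMeasure (gaussMeasure d) :=
  isFiniteMeasure_withDensity_ofReal (integrable_gaussDensity d).2

lemma gaussDensity_normalization :
    (((2 * π) ^ (-(d : ℝ) / 2) : ℝ) : ℂ) * (π / (1 / 2)) ^ (d / 2 : ℂ) = 1 := by
  have two_pi_pos : (0 : ℝ) < 2 * π := by positivity
  have base : (π / (1 / 2) : ℂ) = ((2 * π : ℝ) : ℂ) := by push_cast; ring
  have exponent : (d / 2 : ℂ) = ((d / 2 : ℝ) : ℂ) := by push_cast; ring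
  rw [base, exponent, ← Complex.ofReal_cpow two_pi_pos.le, ← Complex.ofReal_mul,
    ← Real.rpow_add two_pi_pos, neg_div, neg_add_cancel, Real.rpow_zero, Complex.ofReal_one]

lemma gaussMeasure_eq_stdGaussian :
    gaussMeasure d = stdGaussian (EuclideanSpace ℝ (Fin d)) := by
  refine Measure.ext_of_charFun (funext fun t => ?_)
  have fourier := GaussianFourier.integral_cexp_neg_mul_sq_norm_add (b := 1 / 2)
    (V := EuclideanSpace ℝ (Fin d)) (by norm_num) Complex.I t
  rw [finrank_euclideanSpace_fin] at fourier
  have integrand (x : EuclideanSpace ℝ (Fin d)) :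
      (ENNReal.ofReal (gaussDensity d x)).toReal • Complex.exp (⟪x, t⟫ * Complex.I) =
      (((2 * π) ^ (-(d : ℝ) / 2) : ℝ) : ℂ) *
        Complex.exp (-(1 / 2) * ‖x‖ ^ 2 + Complex.I * ⟪t, x⟫) := by
    rw [ENNReal.toReal_ofReal (gaussDensity_nonneg d x), gaussDensity, Complex.real_smul,
      Complex.ofReal_mul, mul_assoc, Complex.ofReal_exp, ← Complex.exp_add, real_inner_comm]
    congr 2
    push_cast
    ring
  rw [charFun_stdGaussian, charFun_apply, gaussMeasure,
    integral_withDensity_eq_integral_toReal_smul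
      (continuous_gaussDensity d).measurable.ennreal_ofReal (by simp)]
  simp_rw [integrand]
  rw [integral_const_mul, fourier, ← mul_assoc, gaussDensity_normalization, one_mul]
  congr 1
  simp
  ring

instance isProbabilityMeasure_gaussMeasure : IsProbabilityMeasure (gaussMeasure d) := by
  rw [gaussMeasure_eq_stdGaussian]; infer_instance

instance nullSingletonClass_gaussMeasure [NeZero d] : NullSingletonClass (gaussMeasure d) := by
  unfold gaussMeasure; infer_instance

lemma gaussMeasure_map_inner (w : EuclideanSpace ℝ (Fin d)) :
    (gaussMeasure d).map (fun x => ⟪x, w⟫) = gaussianReal 0 (‖w‖₊ ^ 2) := by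
  have dual_map := IsGaussian.map_eq_gaussianReal
    (μ := stdGaussian (EuclideanSpace ℝ (Fin d))) (innerSL ℝ w)
  rw [integral_strongDual_stdGaussian, variance_dual_stdGaussian, innerSL_apply_norm] at dual_map
  have inner_eq : (fun x => ⟪x, w⟫) = ⇑(innerSL ℝ w) := by
    ext x; simp [real_inner_comm]
  rw [gaussMeasure_eq_stdGaussian, inner_eq, dual_map]
  congr 1
  ext
  simp

lemma gaussMeasure_map_add_const (μ : EuclideanSpace ℝ (Fin d)) :
    (gaussMeasure d).map (fun x => x + μ) =
      volume.withDensity fun x => ENNReal.ofReal (gaussDensity d (x - μ)) := by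
  ext s hs
  rw [Measure.map_apply (by fun_prop) hs, gaussMeasure,
    withDensity_apply _ (hs.preimage (by fun_prop)), withDensity_apply _ hs,
    ← lintegral_indicator hs, ← lintegral_indicator (hs.preimage (by fun_prop)),
    ← lintegral_add_right_eq_self
      (s.indicator fun x => ENNReal.ofReal (gaussDensity d (x - μ))) μ]
  refine lintegral_congr fun x => ?_
  simp only [Set.indicator, add_sub_cancel_right]
  rfl

end GaussMeasure

section Mixture

variable {d : ℕ} {ε : ℝ} (μ w : EuclideanSpace ℝ (Fin d))

lemma mixMeasure_eq_add_map (hε : ε ∈ Set.Icc (0 : ℝ) 1) :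
    mixMeasure d ε μ = ENNReal.ofReal (1 - ε) • gaussMeasure d +
      ENNReal.ofReal ε • (gaussMeasure d).map (fun x => x + μ) := by
  have hm := (continuous_gaussDensity d).measurable
  have hε' : 0 ≤ 1 - ε := sub_nonneg.2 hε.2
  rw [gaussMeasure_map_add_const, mixMeasure, gaussMeasure, ← withDensity_smul _ (by fun_prop),
    ← withDensity_smul _ (by fun_prop), ← withDensity_add_left (by fun_prop)]
  congr 1 with x
  simp only [Pi.add_apply, Pi.smul_apply, smul_eq_mul]
  rw [← ENNReal.ofReal_mul hε', ← ENNReal.ofReal_mul hε.1,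
    ← ENNReal.ofReal_add (mul_nonneg hε' (gaussDensity_nonneg d _))
      (mul_nonneg hε.1 (gaussDensity_nonneg d _))]

lemma isProbabilityMeasure_mixMeasure (hε : ε ∈ Set.Icc (0 : ℝ) 1) :
    IsProbabilityMeasure (mixMeasure d ε μ) := by
  have := Measure.isProbabilityMeasure_map (μ := gaussMeasure d)
    (f := fun x => x + μ) (by fun_prop)
  constructor
  rw [mixMeasure_eq_add_map μ hε]
  simp [← ENNReal.ofReal_add (sub_nonneg.2 hε.2) hε.1]

lemma mixMeasure_map_inner (hε : ε ∈ Set.Icc (0 : ℝ) 1) :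
    (mixMeasure d ε μ).map (fun x => ⟪x, w⟫) =
      ENNReal.ofReal (1 - ε) • gaussianReal 0 (‖w‖₊ ^ 2) +
        ENNReal.ofReal ε • gaussianReal ⟪μ, w⟫ (‖w‖₊ ^ 2) := by
  have hw : Measurable fun x : EuclideanSpace ℝ (Fin d) => ⟪x, w⟫ := by fun_prop
  have inner_comp_add : (fun x : EuclideanSpace ℝ (Fin d) => ⟪x, w⟫) ∘ (fun x => x + μ) =
      (fun y => y + ⟪μ, w⟫) ∘ fun x => ⟪x, w⟫ := by
    ext x; simp [inner_add_left]
  rw [mixMeasure_eq_add_map μ hε, Measure.map_add _ _ hw, Measure.map_smul, Measure.map_smul,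
    gaussMeasure_map_inner, Measure.map_map hw (by fun_prop), inner_comp_add,
    ← Measure.map_map (by fun_prop) hw, gaussMeasure_map_inner, gaussianReal_map_add_const,
    zero_add]

lemma measureReal_mixMeasure_map_inner (hε : ε ∈ Set.Icc (0 : ℝ) 1) (s : Set ℝ) :
    ((mixMeasure d ε μ).map fun x => ⟪x, w⟫).real s =
      (1 - ε) * (gaussianReal 0 (‖w‖₊ ^ 2)).real s +
        ε * (gaussianReal ⟪μ, w⟫ (‖w‖₊ ^ 2)).real s := by
  rw [mixMeasure_map_inner μ w hε, measureReal_def, Measure.add_apply, Measure.smul_apply,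
    Measure.smul_apply, smul_eq_mul, smul_eq_mul, ENNReal.toReal_add (by finiteness)
      (by finiteness), ENNReal.toReal_mul, ENNReal.toReal_mul,
    ENNReal.toReal_ofReal (sub_nonneg.2 hε.2), ENNReal.toReal_ofReal hε.1]
  rfl

variable {f : ℝ → ℝ}

lemma integrable_comp_inner_mixMeasure (hε : ε ∈ Set.Icc (0 : ℝ) 1)
    (hf : ∀ m v, Integrable f (gaussianReal m v)) :
    Integrable (fun x => f ⟪x, w⟫) (mixMeasure d ε μ) := by
  refine Integrable.comp_measurable (f := fun x => ⟪x, w⟫) (g := f) ?_ (by fun_prop)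
  rw [mixMeasure_map_inner μ w hε]
  exact ((hf _ _).smul_measure ENNReal.ofReal_ne_top).add_measure
    ((hf _ _).smul_measure ENNReal.ofReal_ne_top)

lemma integral_comp_inner_mixMeasure (hε : ε ∈ Set.Icc (0 : ℝ) 1) (hfm : Measurable f)
    (hf : ∀ m v, Integrable f (gaussianReal m v)) :
    ∫ x, f ⟪x, w⟫ ∂(mixMeasure d ε μ) =
      (1 - ε) * ∫ x, f x ∂(gaussianReal 0 (‖w‖₊ ^ 2)) +
        ε * ∫ x, f x ∂(gaussianReal ⟪μ, w⟫ (‖w‖₊ ^ 2)) := by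
  rw [← integral_map (φ := fun x => ⟪x, w⟫) (by fun_prop) hfm.aestronglyMeasurable,
    mixMeasure_map_inner μ w hε, integral_add_measure ((hf _ _).smul_measure ENNReal.ofReal_ne_top)
      ((hf _ _).smul_measure ENNReal.ofReal_ne_top), integral_smul_measure, integral_smul_measure,
    ENNReal.toReal_ofReal (sub_nonneg.2 hε.2), ENNReal.toReal_ofReal hε.1]
  simp

lemma integral_sq_gaussianReal (m : ℝ) (v : NNReal) :
    ∫ x, x ^ 2 ∂(gaussianReal m v) = m ^ 2 + v := by
  have h := variance_eq_sub (memLp_id_gaussianReal (μ := m) (v := v) 2)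
  rw [variance_id_gaussianReal] at h
  simp only [id, Pi.pow_apply, integral_id_gaussianReal] at h
  linarith

lemma integrable_inner_sq_mixMeasure (hε : ε ∈ Set.Icc (0 : ℝ) 1) :
    Integrable (fun x => ⟪x, w⟫ ^ 2) (mixMeasure d ε μ) :=
  integrable_comp_inner_mixMeasure μ w hε (f := fun x => x ^ 2)
    fun _ _ => (memLp_id_gaussianReal 2).integrable_sq

lemma integral_inner_sq_mixMeasure (hε : ε ∈ Set.Icc (0 : ℝ) 1) :
    ∫ x, ⟪x, w⟫ ^ 2 ∂(mixMeasure d ε μ) = ‖w‖ ^ 2 + ε * ⟪μ, w⟫ ^ 2 := by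
  rw [integral_comp_inner_mixMeasure μ w hε (f := fun x => x ^ 2) (by fun_prop)
    fun _ _ => (memLp_id_gaussianReal 2).integrable_sq]
  simp only [integral_sq_gaussianReal, NNReal.coe_pow, coe_nnnorm]
  ring

lemma norm_sq_eq_sum_inner_single_sq (x : EuclideanSpace ℝ (Fin d)) :
    ‖x‖ ^ 2 = ∑ j, ⟪x, EuclideanSpace.single j (1 : ℝ)⟫ ^ 2 := by
  simp [EuclideanSpace.real_norm_sq_eq, EuclideanSpace.inner_single_right]

lemma memLp_id_mixMeasure (hε : ε ∈ Set.Icc (0 : ℝ) 1) : MemLp id 2 (mixMeasure d ε μ) := by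
  rw [memLp_two_iff_integrable_sq_norm (by fun_prop)]
  simp only [id, norm_sq_eq_sum_inner_single_sq]
  exact integrable_finsetSum _ fun j _ => integrable_inner_sq_mixMeasure μ _ hε

lemma integral_id_mixMeasure (hε : ε ∈ Set.Icc (0 : ℝ) 1) :
    ∫ x, x ∂(mixMeasure d ε μ) = ε • μ := by
  have := isProbabilityMeasure_mixMeasure μ hε
  refine ext_inner_right ℝ fun w => ?_
  have mean := integral_comp_inner_mixMeasure μ w hε measurable_id fun _ _ =>
    (memLp_id_gaussianReal 1).integrable le_rfl
  simp only [id, integral_id_gaussianReal, mul_zero, zero_add] at mean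
  have integrable_id : Integrable (fun x => x) (mixMeasure d ε μ) :=
    (memLp_id_mixMeasure μ hε).integrable one_le_two
  rw [real_inner_comm, ← integral_inner integrable_id, real_inner_smul_left, ← mean]
  simp [real_inner_comm]

lemma integral_norm_sq_mixMeasure (hε : ε ∈ Set.Icc (0 : ℝ) 1) :
    ∫ x, ‖x‖ ^ 2 ∂(mixMeasure d ε μ) = d + ε * ‖μ‖ ^ 2 := by
  simp only [norm_sq_eq_sum_inner_single_sq]
  rw [integral_finsetSum _ fun j _ => integrable_inner_sq_mixMeasure μ _ hε]
  simp [integral_inner_sq_mixMeasure μ _ hε, Finset.sum_add_distrib, Finset.mul_sum]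

end Mixture

section Level

variable {d n : ℕ} {α : ℝ}

instance isProbabilityMeasure_nullPi (n : ℕ) : IsProbabilityMeasure (nullPi n) := by
  unfold nullPi; infer_instance

instance nullSingletonClass_stdGaussianReal : NullSingletonClass (gaussianReal 0 1) :=
  nullSingletonClass_gaussianReal one_ne_zero

lemma measurable_orderStat_of_mem_Kset (hn : 2 ≤ n) (k : ℕ) (hk : k ∈ Kset n) :
    Measurable fun z : Fin n → ℝ => orderStat z (n - k + 1) := by
  have := one_le_of_mem_Kset hk
  have := two_mul_le_of_mem_Kset hn hk
  exact measurable_orderStat (by omega) (by omega)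

lemma nullSingletonClass_nullPi_map_orderStat (hn : 2 ≤ n) (k : ℕ) (hk : k ∈ Kset n) :
    NullSingletonClass ((nullPi n).map fun z => orderStat z (n - k + 1)) := by
  have := one_le_of_mem_Kset hk
  have := two_mul_le_of_mem_Kset hn hk
  exact nullSingletonClass_map_orderStat _ (by omega) (by omega)

/-- The rejection region of the test `Ψ₂` as a set of projected samples `(Z₁, …, Zₙ)`. -/
def orderStatRejection (n : ℕ) (α : ℝ) : Set (Fin n → ℝ) :=
  multipleRejection (nullPi n) (fun k z => orderStat z (n - k + 1)) (Kset n) (alphaCorr n α)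

lemma measurableSet_orderStatRejection (hn : 2 ≤ n) (α : ℝ) :
    MeasurableSet (orderStatRejection n α) :=
  measurableSet_multipleRejection (measurable_orderStat_of_mem_Kset hn)

lemma nullPi_orderStatRejection_le (hn : 2 ≤ n) (hα : α ∈ Set.Ioo (0 : ℝ) 1) :
    nullPi n (orderStatRejection n α) ≤ ENNReal.ofReal α :=
  measure_multipleRejection_correctedLevel_le (measurable_orderStat_of_mem_Kset hn)
    (nullSingletonClass_nullPi_map_orderStat hn) (Kset_nonempty n) hα

/-- The direction `vₙ = Āₙ / ‖Āₙ‖` estimated on the first half of the sample; it is `0` when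
`Āₙ = 0`. -/
def empDirection (A : Fin n → EuclideanSpace ℝ (Fin d)) : EuclideanSpace ℝ (Fin d) :=
  ‖avg A‖⁻¹ • avg A

lemma measurable_empDirection :
    Measurable (empDirection : (Fin n → EuclideanSpace ℝ (Fin d)) → _) :=
  measurable_avg.norm.inv.smul measurable_avg

lemma norm_empDirection {A : Fin n → EuclideanSpace ℝ (Fin d)} (hA : avg A ≠ 0) :
    ‖empDirection A‖ = 1 :=
  norm_smul_inv_norm (𝕜 := ℝ) hA

lemma norm_avg_smul_empDirection (A : Fin n → EuclideanSpace ℝ (Fin d)) :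
    ‖avg A‖ • empDirection A = avg A := by
  rcases eq_or_ne (avg A) 0 with hA | hA
  · simp [hA]
  · exact smul_inv_smul₀ (norm_ne_zero_iff.2 hA) _

lemma rejRegion2_eq_preimage :
    rejRegion2 d n α =
      (fun p i => ⟪p.2 i, empDirection p.1⟫) ⁻¹' orderStatRejection n α :=
  rfl

lemma measurableSet_rejRegion2 (hn : 2 ≤ n) (α : ℝ) : MeasurableSet (rejRegion2 d n α) := by
  rw [rejRegion2_eq_preimage]
  refine measurableSet_preimage (measurable_pi_lambda _ fun i => ?_)
    (measurableSet_orderStatRejection hn α)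
  exact ((measurable_pi_apply i).comp measurable_snd).inner
    (measurable_empDirection.comp measurable_fst)

lemma pi_map_inner (P : Measure (EuclideanSpace ℝ (Fin d))) [IsFiniteMeasure P]
    (v : EuclideanSpace ℝ (Fin d)) :
    (Measure.pi fun _ : Fin n => P).map (fun Y i => ⟪Y i, v⟫) =
      Measure.pi fun _ : Fin n => P.map fun x => ⟪x, v⟫ :=
  Measure.pi_map_pi (f := fun _ x => ⟪x, v⟫) fun _ => by fun_prop

lemma pi_gaussMeasure_map_inner {v : EuclideanSpace ℝ (Fin d)} (hv : ‖v‖ = 1) :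
    (Measure.pi fun _ : Fin n => gaussMeasure d).map (fun Y i => ⟪Y i, v⟫) = nullPi n := by
  have : ‖v‖₊ = 1 := NNReal.eq hv
  rw [pi_map_inner, gaussMeasure_map_inner, this, one_pow, nullPi]

lemma ae_avg_ne_zero (P : Measure (EuclideanSpace ℝ (Fin d))) [IsProbabilityMeasure P]
    [NullSingletonClass P] (hn : n ≠ 0) : ∀ᵐ A ∂(Measure.pi fun _ : Fin n => P), avg A ≠ 0 := by
  refine measure_eq_zero_iff_ae_notMem.1 (measure_mono_null (fun A hA => ?_)
    (pi_sum_eq_null P hn 0))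
  exact (smul_eq_zero_iff_right (inv_ne_zero (Nat.cast_ne_zero.2 hn))).1 hA

lemma splitLaw_gaussMeasure_rejRegion2_le (hd : d ≠ 0) (hn : 2 ≤ n)
    (hα : α ∈ Set.Ioo (0 : ℝ) 1) :
    splitLaw n (gaussMeasure d) (rejRegion2 d n α) ≤ ENNReal.ofReal α := by
  have : NeZero d := ⟨hd⟩
  have conditional_level : ∀ᵐ A ∂(Measure.pi fun _ : Fin n => gaussMeasure d),
      (Measure.pi fun _ : Fin n => gaussMeasure d) (Prod.mk A ⁻¹' rejRegion2 d n α) ≤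
        ENNReal.ofReal α := by
    filter_upwards [ae_avg_ne_zero (gaussMeasure d) (by omega)] with A hA
    have level := nullPi_orderStatRejection_le hn hα
    rwa [← pi_gaussMeasure_map_inner (norm_empDirection hA), Measure.map_apply (by fun_prop)
      (measurableSet_orderStatRejection hn α)] at level
  rw [splitLaw, Measure.prod_apply (measurableSet_rejRegion2 hn α)]
  exact (lintegral_mono_ae conditional_level).trans_eq (by simp)

end Level

section Direction

variable {d n : ℕ} {β ε B : ℝ} (μ : EuclideanSpace ℝ (Fin d))

lemma pi_mixMeasure_inner_avg_le (hn : n ≠ 0) (hε : ε ∈ Set.Ioc (0 : ℝ) 1) (hμ : μ ≠ 0) :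
    (Measure.pi fun _ : Fin n => mixMeasure d ε μ).real {A | ⟪avg A, μ⟫ ≤ ε * ‖μ‖ ^ 2 / 2} ≤
      4 / (n * (ε * ‖μ‖) ^ 2) + 4 / (n * ε) := by
  have hε' : ε ∈ Set.Icc (0 : ℝ) 1 := Set.Ioc_subset_Icc_self hε
  have := isProbabilityMeasure_mixMeasure μ hε'
  have : 0 < ‖μ‖ := norm_pos_iff.2 hμ
  have : 0 < ε := hε.1
  have inner_memLp : MemLp (fun x => ⟪x, μ⟫) 2 (mixMeasure d ε μ) :=
    (memLp_two_iff_integrable_sq (by fun_prop)).2 (integrable_inner_sq_mixMeasure μ μ hε')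
  have mean : ∫ x, ⟪x, μ⟫ ∂(mixMeasure d ε μ) = ε * ‖μ‖ ^ 2 := by
    have := integral_comp_inner_mixMeasure μ μ hε' measurable_id fun _ _ =>
      (memLp_id_gaussianReal 1).integrable le_rfl
    simpa using this
  have variance_le : Var[fun x => ⟪x, μ⟫; mixMeasure d ε μ] ≤ ‖μ‖ ^ 2 + ε * (‖μ‖ ^ 2) ^ 2 := by
    have := integral_inner_sq_mixMeasure μ μ hε'
    rw [real_inner_self_eq_norm_sq] at this
    exact (variance_le_expectation_sq inner_memLp.aestronglyMeasurable).trans_eq this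
  have chebyshev := pi_real_mean_le_sub_le inner_memLp hn (c := ε * ‖μ‖ ^ 2 / 2) (by positivity)
  rw [mean, sub_half] at chebyshev
  simp only [inner_avg]
  calc _ ≤ Var[fun x => ⟪x, μ⟫; mixMeasure d ε μ] / (n * (ε * ‖μ‖ ^ 2 / 2) ^ 2) := chebyshev
    _ ≤ (‖μ‖ ^ 2 + ε * (‖μ‖ ^ 2) ^ 2) / (n * (ε * ‖μ‖ ^ 2 / 2) ^ 2) := by gcongr
    _ = 4 / (n * (ε * ‖μ‖) ^ 2) + 4 / (n * ε) := by field_simp; norm_num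

lemma pi_mixMeasure_norm_sq_avg_ge_le (hε : ε ∈ Set.Icc (0 : ℝ) 1) (hμ : ε * ‖μ‖ ≠ 0)
    (hnε : 1 ≤ n * ε) (hβ : 0 < β) :
    (Measure.pi fun _ : Fin n => mixMeasure d ε μ).real
        {A | 4 / β * (2 * (ε * ‖μ‖) ^ 2 + d / n) ≤ ‖avg A‖ ^ 2} ≤ β / 4 := by
  have := isProbabilityMeasure_mixMeasure μ hε
  have hn : n ≠ 0 := by rintro rfl; norm_num at hnε
  have markov := pi_real_norm_sq_avg_ge_le (memLp_id_mixMeasure μ hε) hn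
    (c := 4 / β * (2 * (ε * ‖μ‖) ^ 2 + d / n)) (by positivity)
  rw [integral_id_mixMeasure μ hε, integral_norm_sq_mixMeasure μ hε, norm_smul,
    Real.norm_of_nonneg hε.1] at markov
  refine markov.trans ((div_le_iff₀ (by positivity)).2 ?_)
  have signal_term : ε * ‖μ‖ ^ 2 / n ≤ (ε * ‖μ‖) ^ 2 := by
    rw [div_le_iff₀ (by positivity)]
    calc ε * ‖μ‖ ^ 2 ≤ n * ε * (ε * ‖μ‖ ^ 2) :=
          le_mul_of_one_le_left (mul_nonneg hε.1 (sq_nonneg _)) hnε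
      _ = (ε * ‖μ‖) ^ 2 * n := by ring
  calc (ε * ‖μ‖) ^ 2 + (d + ε * ‖μ‖ ^ 2) / n
      = (ε * ‖μ‖) ^ 2 + d / n + ε * ‖μ‖ ^ 2 / n := by ring
    _ ≤ 2 * (ε * ‖μ‖) ^ 2 + d / n := by linarith
    _ = β / 4 * (4 / β * (2 * (ε * ‖μ‖) ^ 2 + d / n)) := by field_simp

lemma mul_two_sq_add_div_le {N D r : ℝ} (hN : 0 < N) (hD : 1 ≤ D) (hB : 1 ≤ B)
    (hr : B * √D ≤ N * r ^ 2) : B * (2 * r ^ 2 + D / N) ≤ 3 * N * r ^ 4 := by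
  have one_le_sqrt : 1 ≤ √D := Real.one_le_sqrt.2 hD
  have B_le : B ≤ N * r ^ 2 := (le_mul_of_one_le_right (by linarith) one_le_sqrt).trans hr
  have B_mul_D_le : B * D ≤ (N * r ^ 2) ^ 2 :=
    calc B * D ≤ B ^ 2 * D := by gcongr; exact le_self_pow₀ hB two_ne_zero
      _ = (B * √D) ^ 2 := by rw [mul_pow, sq_sqrt (by linarith)]
      _ ≤ (N * r ^ 2) ^ 2 := by gcongr
  refine le_of_mul_le_mul_left ?_ hN
  calc N * (B * (2 * r ^ 2 + D / N)) = 2 * (B * (N * r ^ 2)) + B * D := by field_simp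
    _ ≤ 2 * (N * r ^ 2 * (N * r ^ 2)) + (N * r ^ 2) ^ 2 := by gcongr
    _ = N * (3 * N * r ^ 4) := by ring

lemma sqrt_le_mul_inner_empDirection {A : Fin n → EuclideanSpace ℝ (Fin d)} (hn : n ≠ 0)
    (hd : d ≠ 0) (hβ : 0 < β) (hε : 0 ≤ ε) (hB : 1 ≤ B) (hr : B * √d ≤ n * (ε * ‖μ‖) ^ 2)
    (hinner : ε * ‖μ‖ ^ 2 / 2 ≤ ⟪avg A, μ⟫)
    (hnorm : ‖avg A‖ ^ 2 ≤ 4 / β * (2 * (ε * ‖μ‖) ^ 2 + d / n)) :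
    √(β * B / (48 * n)) ≤ ε * ⟪μ, empDirection A⟫ := by
  set W := 2 * (ε * ‖μ‖) ^ 2 + (d : ℝ) / n
  set e := ε * ⟪μ, empDirection A⟫
  have W_pos : 0 < W := by positivity
  have energy : B * W ≤ 3 * n * (ε * ‖μ‖) ^ 4 :=
    mul_two_sq_add_div_le (by positivity) (by exact_mod_cast Nat.one_le_iff_ne_zero.2 hd) hB hr
  have e_nonneg : 0 ≤ e := by
    have : 0 ≤ ⟪avg A, μ⟫ := le_trans (by positivity) hinner
    rw [real_inner_comm] at this
    simp only [e, empDirection, inner_smul_right]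
    positivity
  have signal : (ε * ‖μ‖) ^ 2 / 2 ≤ e * ‖avg A‖ :=
    calc (ε * ‖μ‖) ^ 2 / 2 = ε * (ε * ‖μ‖ ^ 2 / 2) := by ring
      _ ≤ ε * ⟪avg A, μ⟫ := by gcongr
      _ = ε * ⟪‖avg A‖ • empDirection A, μ⟫ := by rw [norm_avg_smul_empDirection]
      _ = e * ‖avg A‖ := by rw [real_inner_smul_left, real_inner_comm]; ring
  refine Real.sqrt_le_iff.2 ⟨e_nonneg, (div_le_iff₀ (by positivity)).2 ?_⟩
  refine le_of_mul_le_mul_right ?_ W_pos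
  calc β * B * W = β * (B * W) := by ring
    _ ≤ β * (3 * n * (ε * ‖μ‖) ^ 4) := by gcongr
    _ = β * (12 * n * ((ε * ‖μ‖) ^ 2 / 2) ^ 2) := by ring
    _ ≤ β * (12 * n * (e * ‖avg A‖) ^ 2) := by gcongr
    _ = 12 * β * n * e ^ 2 * ‖avg A‖ ^ 2 := by ring
    _ ≤ 12 * β * n * e ^ 2 * (4 / β * W) := by gcongr
    _ = e ^ 2 * (48 * n) * W := by field_simp; ring

lemma pi_mixMeasure_inner_empDirection_lt_le (hd : d ≠ 0) (hε : ε ∈ Set.Ioc (0 : ℝ) 1)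
    (hβ : 0 < β) (hB : 1 ≤ B) (hβB : 32 ≤ β * B) (hr : B * √d ≤ n * (ε * ‖μ‖) ^ 2)
    (hnε : 1 ≤ n * ε) (hβnε : 32 ≤ β * (n * ε)) :
    (Measure.pi fun _ : Fin n => mixMeasure d ε μ).real
        {A | ε * ⟪μ, empDirection A⟫ < √(β * B / (48 * n))} ≤ β / 2 := by
  have := isProbabilityMeasure_mixMeasure μ (Set.Ioc_subset_Icc_self hε)
  have hn : n ≠ 0 := by rintro rfl; norm_num at hnε
  have one_le_sqrt : 1 ≤ √d := Real.one_le_sqrt.2 (by exact_mod_cast Nat.one_le_iff_ne_zero.2 hd)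
  have B_le : B ≤ n * (ε * ‖μ‖) ^ 2 := (le_mul_of_one_le_right (by linarith) one_le_sqrt).trans hr
  have hμ : ε * ‖μ‖ ≠ 0 := by rintro h; rw [h] at B_le; norm_num at B_le; linarith
  have four_div_le {x : ℝ} (hx : 0 < x) (hβx : 32 ≤ β * x) : 4 / x ≤ β / 8 := by
    rw [div_le_div_iff₀ hx (by norm_num)]; linarith
  have inner_bad := pi_mixMeasure_inner_avg_le μ hn hε
    (norm_ne_zero_iff.1 (right_ne_zero_of_mul hμ))
  have bound₁ := four_div_le (x := n * (ε * ‖μ‖) ^ 2) (by positivity)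
    (hβB.trans (by gcongr))
  have bound₂ := four_div_le (by linarith) hβnε
  have norm_bad := pi_mixMeasure_norm_sq_avg_ge_le μ (Set.Ioc_subset_Icc_self hε) hμ hnε hβ
  have bad_subset : {A | ε * ⟪μ, empDirection A⟫ < √(β * B / (48 * n))} ⊆
      {A | ⟪avg A, μ⟫ ≤ ε * ‖μ‖ ^ 2 / 2} ∪
        {A | 4 / β * (2 * (ε * ‖μ‖) ^ 2 + d / n) ≤ ‖avg A‖ ^ 2} := fun A hA => by
    by_contra hgood
    obtain ⟨hinner, hnorm⟩ := not_or.1 hgood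
    exact (sqrt_le_mul_inner_empDirection μ hn hd hβ hε.1.le hB hr (not_le.1 hinner).le
      (not_le.1 hnorm).le).not_gt hA
  refine (measureReal_mono bad_subset).trans ((measureReal_union_le _ _).trans ?_)
  linarith

end Direction

section GaussianTail

lemma measureReal_Ioi_add_mul_le_gaussianReal {R m t : ℝ} (hm : 0 ≤ m) (ht : t ≤ R)
    (hmt : m - t ≤ R) :
    (gaussianReal 0 1).real (Set.Ioi t) + m * gaussianPDFReal 0 1 R ≤
      (gaussianReal m 1).real (Set.Ioi t) := by
  have shift : (gaussianReal m 1).real (Set.Ioi t) =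
      (gaussianReal 0 1).real (Set.Ioi (t - m)) := by
    have := gaussianReal_map_add_const (μ := 0) (v := 1) m
    rw [zero_add] at this
    rw [← this, map_measureReal_apply (by fun_prop) measurableSet_Ioi, Set.preimage_add_const_Ioi]
  have pdf_ge {x : ℝ} (hx : x ∈ Set.Ioc (t - m) t) :
      gaussianPDFReal 0 1 R ≤ gaussianPDFReal 0 1 x := by
    have : x ^ 2 ≤ R ^ 2 := sq_le_sq' (by linarith [hx.1]) (hx.2.trans ht)
    simp only [gaussianPDFReal, sub_zero]
    gcongr
  have window : m * gaussianPDFReal 0 1 R ≤ (gaussianReal 0 1).real (Set.Ioc (t - m) t) := by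
    rw [measureReal_def, gaussianReal_apply_eq_integral 0 one_ne_zero,
      ENNReal.toReal_ofReal (integral_nonneg fun x => gaussianPDFReal_nonneg _ _ _)]
    calc m * gaussianPDFReal 0 1 R = ∫ _ in Set.Ioc (t - m) t, gaussianPDFReal 0 1 R := by
          simp [hm]
      _ ≤ ∫ x in Set.Ioc (t - m) t, gaussianPDFReal 0 1 x :=
          setIntegral_mono_on (by simp) (integrable_gaussianPDFReal _ _).integrableOn
            measurableSet_Ioc fun x hx => pdf_ge hx
  rw [shift, ← Set.Ioc_union_Ioi_eq_Ioi (sub_le_self t hm),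
    measureReal_union (Set.Ioc_disjoint_Ioi le_rfl) measurableSet_Ioi]
  linarith

lemma exists_measureReal_Ioi_add_mul_le_gaussianReal (M : ℝ) {a b : ℝ} (ha : 0 < a)
    (hb : b < 1) :
    ∃ c > 0, ∀ t, (gaussianReal 0 1).real (Set.Ioi t) ∈ Set.Icc a b → ∀ m ∈ Set.Icc 0 M,
      (gaussianReal 0 1).real (Set.Ioi t) + m * c ≤ (gaussianReal m 1).real (Set.Ioi t) := by
  obtain ⟨T, hT⟩ := exists_forall_abs_le_of_measureReal_Ioi_mem_Icc (gaussianReal 0 1) ha hb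
  refine ⟨_, gaussianPDFReal_pos 0 1 (T + M) one_ne_zero, fun t ht m hm => ?_⟩
  have := abs_le.1 (hT t ht)
  exact measureReal_Ioi_add_mul_le_gaussianReal hm.1 (by linarith [hm.1, hm.2])
    (by linarith [hm.2])

lemma exists_measureReal_Ioi_eq (ν : Measure ℝ) [IsProbabilityMeasure ν] [NullSingletonClass ν]
    {p : ℝ} (hp : p ∈ Set.Ioo (0 : ℝ) 1) : ∃ t, ν.real (Set.Ioi t) = p := by
  have : NullSingletonClass (ν.map fun x => x) := by rwa [Measure.map_id']
  exact ⟨_, measureReal_upperQuantile_lt measurable_id hp⟩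

end GaussianTail

section Power

variable {d n : ℕ} {α β ε s : ℝ}

lemma quant_alphaCorr_le {k : ℕ} {t : ℝ} (hn : 2 ≤ n) (hα : α ∈ Set.Ioo (0 : ℝ) 1)
    (hk : k ∈ Kset n) (hs : 0 ≤ s) (hsα : exp (-2 * n * s ^ 2) ≤ α / (Kset n).card)
    (ht : n * ((gaussianReal 0 1).real (Set.Ioi t) + s) ≤ k) :
    quant n (alphaCorr n α) k ≤ t := by
  have := two_mul_le_of_mem_Kset hn hk
  have hT := measurable_orderStat_of_mem_Kset hn
  have hP := nullSingletonClass_nullPi_map_orderStat hn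
  have div_card_le : α / (Kset n).card ≤ alphaCorr n α :=
    div_card_le_correctedLevel hT hP (Kset_nonempty n) hα
  have hlevel : alphaCorr n α ∈ Set.Ioo (0 : ℝ) 1 :=
    correctedLevel_mem_Ioo hT hP (Kset_nonempty n) hα
  have false_alarm := pi_real_lt_orderStat_le _ (one_le_of_mem_Kset hk) (by omega) hs ht
  exact upperQuantile_le (hT k hk) hlevel.1.le hlevel.2
    (false_alarm.trans (hsα.trans div_card_le))

lemma exists_mem_Kset_quant_alphaCorr_le (hn : 2 ≤ n) (hα : α ∈ Set.Ioo (0 : ℝ) 1)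
    (hs : s ∈ Set.Icc (0 : ℝ) (1 / 8)) (hsα : exp (-2 * n * s ^ 2) ≤ α / (Kset n).card) :
    ∃ k ∈ Kset n, ∃ t, (gaussianReal 0 1).real (Set.Ioi t) ∈ Set.Icc (1 / 8 : ℝ) (1 / 2) ∧
      n * ((gaussianReal 0 1).real (Set.Ioi t) + s) = k ∧ quant n (alphaCorr n α) k ≤ t := by
  obtain ⟨k, hk, quarter_lt⟩ := exists_mem_Kset_quarter_lt n
  have n_pos : (0 : ℝ) < n := by positivity
  have quarter_le : 1 / 4 ≤ (k : ℝ) / n := by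
    have : (n : ℝ) < 4 * k := by exact_mod_cast quarter_lt
    rw [le_div_iff₀ n_pos]; linarith
  have le_half : (k : ℝ) / n ≤ 1 / 2 := by
    have : 2 * (k : ℝ) ≤ n := by exact_mod_cast two_mul_le_of_mem_Kset hn hk
    rw [div_le_iff₀ n_pos]; linarith
  obtain ⟨t, ht⟩ := exists_measureReal_Ioi_eq (gaussianReal 0 1) (p := k / n - s)
    ⟨by linarith [hs.2], by linarith [hs.1]⟩
  have rank_eq : n * ((gaussianReal 0 1).real (Set.Ioi t) + s) = k := by
    rw [ht, sub_add_cancel, mul_div_cancel₀ _ n_pos.ne']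
  exact ⟨k, hk, t, ht ▸ ⟨by linarith [hs.2], by linarith [hs.1]⟩, rank_eq,
    quant_alphaCorr_le hn hα hk hs.1 hsα rank_eq.le⟩

lemma pi_real_compl_orderStatRejection_le (ν : Measure ℝ) [IsProbabilityMeasure ν] (hn : 2 ≤ n)
    (hα : α ∈ Set.Ioo (0 : ℝ) 1) (hs : s ∈ Set.Icc (0 : ℝ) (1 / 8))
    (hsα : exp (-2 * n * s ^ 2) ≤ α / (Kset n).card)
    (hν : ∀ t, (gaussianReal 0 1).real (Set.Ioi t) ∈ Set.Icc (1 / 8 : ℝ) (1 / 2) →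
      (gaussianReal 0 1).real (Set.Ioi t) + 2 * s ≤ ν.real (Set.Ioi t)) :
    (Measure.pi fun _ : Fin n => ν).real (orderStatRejection n α)ᶜ ≤ exp (-2 * n * s ^ 2) := by
  obtain ⟨k, hk, t, ht, rank_eq, quant_le⟩ := exists_mem_Kset_quant_alphaCorr_le hn hα hs hsα
  have hkn := two_mul_le_of_mem_Kset hn hk
  calc (Measure.pi fun _ : Fin n => ν).real (orderStatRejection n α)ᶜ
      ≤ (Measure.pi fun _ : Fin n => ν).real {z | orderStat z (n - k + 1) ≤ t} :=
        measureReal_mono fun z hz => (not_lt.1 fun h => hz ⟨k, hk, h⟩).trans quant_le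
    _ ≤ exp (-2 * n * s ^ 2) := by
        refine pi_real_orderStat_le_le ν (one_le_of_mem_Kset hk) (by omega) hs.1 ?_
        rw [← rank_eq, ← mul_add]
        gcongr
        linarith [hν t ht]

lemma prod_le_add_of_forall_section_le {X Y : Type*} [MeasurableSpace X] [MeasurableSpace Y]
    {P : Measure X} {Q : Measure Y} [IsProbabilityMeasure P] [IsProbabilityMeasure Q]
    {S : Set (X × Y)} {B : Set X} (hS : MeasurableSet S) (hB : MeasurableSet B) {b : ENNReal}
    (h : ∀ x ∉ B, Q (Prod.mk x ⁻¹' S) ≤ b) : P.prod Q S ≤ P B + b := by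
  rw [Measure.prod_apply hS]
  calc ∫⁻ x, Q (Prod.mk x ⁻¹' S) ∂P ≤ ∫⁻ x, B.indicator 1 x + b ∂P := by
        refine lintegral_mono fun x => ?_
        by_cases hx : x ∈ B
        · simpa [hx] using prob_le_one.trans (le_add_right le_rfl)
        · simpa [hx] using h x hx
    _ = P B + b := by
        rw [lintegral_add_left (measurable_one.indicator hB), lintegral_indicator_one hB]
        simp

lemma measureReal_Ioi_add_mul_le_mixMeasure {c t : ℝ} {μ v : EuclideanSpace ℝ (Fin d)}
    (hε : ε ∈ Set.Icc (0 : ℝ) 1) (hv : ‖v‖ = 1)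
    (hgain : (gaussianReal 0 1).real (Set.Ioi t) + ⟪μ, v⟫ * c ≤
      (gaussianReal ⟪μ, v⟫ 1).real (Set.Ioi t)) :
    (gaussianReal 0 1).real (Set.Ioi t) + ε * ⟪μ, v⟫ * c ≤
      ((mixMeasure d ε μ).map fun x => ⟪x, v⟫).real (Set.Ioi t) := by
  have : ‖v‖₊ = 1 := NNReal.eq hv
  rw [measureReal_mixMeasure_map_inner μ v hε, this, one_pow]
  linarith [mul_le_mul_of_nonneg_left hgain hε.1]

lemma splitLaw_mixMeasure_compl_rejRegion2_le_add {M b c : ℝ} {μ : EuclideanSpace ℝ (Fin d)}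
    (hn : 2 ≤ n) (hα : α ∈ Set.Ioo (0 : ℝ) 1) (hε : ε ∈ Set.Icc (0 : ℝ) 1) (hμ : ‖μ‖ ≤ M)
    (hc : 0 < c) (hgain : ∀ t,
      (gaussianReal 0 1).real (Set.Ioi t) ∈ Set.Icc (1 / 8 : ℝ) (1 / 2) → ∀ m ∈ Set.Icc 0 M,
      (gaussianReal 0 1).real (Set.Ioi t) + m * c ≤ (gaussianReal m 1).real (Set.Ioi t))
    (hs : s ∈ Set.Ioc (0 : ℝ) (1 / 8)) (hsα : exp (-2 * n * s ^ 2) ≤ α / (Kset n).card)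
    (hsb : 2 * s ≤ b * c) :
    splitLaw n (mixMeasure d ε μ) (rejRegion2 d n α)ᶜ ≤
      (Measure.pi fun _ : Fin n => mixMeasure d ε μ) {A | ε * ⟪μ, empDirection A⟫ < b} +
        ENNReal.ofReal (exp (-2 * n * s ^ 2)) := by
  have := isProbabilityMeasure_mixMeasure μ hε
  refine prod_le_add_of_forall_section_le (measurableSet_rejRegion2 hn α).compl
    (measurableSet_lt ((measurable_const.inner measurable_empDirection).const_mul ε)
      measurable_const) fun A hA => ?_
  have b_le : b ≤ ε * ⟪μ, empDirection A⟫ := not_lt.1 hA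
  set v := empDirection A with hv_def
  have signal_pos : 0 < ε * ⟪μ, v⟫ :=
    (pos_of_mul_pos_left ((mul_pos two_pos hs.1).trans_le hsb) hc.le).trans_le b_le
  have inner_pos : 0 < ⟪μ, v⟫ := pos_of_mul_pos_right signal_pos hε.1
  have hv : ‖v‖ = 1 := norm_empDirection fun h => by simp [hv_def, empDirection, h] at inner_pos
  have inner_le : ⟪μ, v⟫ ≤ M := (real_inner_le_norm μ v).trans (by rwa [hv, mul_one])
  have := Measure.isProbabilityMeasure_map (μ := mixMeasure d ε μ)
    (f := fun x => ⟪x, v⟫) (by fun_prop)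
  have signal_le : 2 * s ≤ ε * ⟪μ, v⟫ * c := hsb.trans (mul_le_mul_of_nonneg_right b_le hc.le)
  have miss := pi_real_compl_orderStatRejection_le ((mixMeasure d ε μ).map fun x => ⟪x, v⟫) hn hα
    ⟨hs.1.le, hs.2⟩ hsα fun t ht => by
      linarith [measureReal_Ioi_add_mul_le_mixMeasure hε hv
        (hgain t ht _ ⟨inner_pos.le, inner_le⟩)]
  rw [← pi_map_inner, map_measureReal_apply (by fun_prop)
    (measurableSet_orderStatRejection hn α).compl] at miss
  exact (ENNReal.le_ofReal_iff_toReal_le (measure_ne_top _ _) (exp_pos _).le).2 miss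

end Power

section Calibration

lemma one_le_log_log {x : ℝ} (hx : 16 ≤ x) : 1 ≤ log (log x) := by
  have log_sixteen : log 16 = 4 * log 2 := by
    rw [show (16 : ℝ) = 2 ^ 4 by norm_num, log_pow]; norm_num
  have exp_one_le : exp 1 ≤ log x := by
    linarith [log_two_gt_d9, exp_one_lt_d9, log_le_log (by norm_num) hx]
  rwa [le_log_iff_exp_le ((exp_pos 1).trans_le exp_one_le)]

lemma exp_neg_mul_le {a D L : ℝ} (ha : a ∈ Set.Ioc (0 : ℝ) 1) (hD : 2 / a ≤ D) (hL : 1 ≤ L) :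
    exp (-(D * L)) ≤ a / 2 * exp (-L) := by
  have two_le : 2 ≤ D := ((le_div_iff₀ ha.1).2 (by linarith [ha.2])).trans hD
  have le_exp : 2 / a ≤ exp ((D - 1) * L) := by
    nlinarith [add_one_le_exp ((D - 1) * L)]
  calc exp (-(D * L)) = (exp ((D - 1) * L))⁻¹ * exp (-L) := by
        rw [← exp_neg, ← exp_add]; ring_nf
    _ ≤ (2 / a)⁻¹ * exp (-L) := by
        have := ha.1
        gcongr
    _ = a / 2 * exp (-L) := by rw [inv_div]

lemma exp_neg_mul_log_log_le_div_card_Kset {α D : ℝ} {n : ℕ} (hα : α ∈ Set.Ioc (0 : ℝ) 1)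
    (hD : 2 / α ≤ D) (hn : (16 : ℝ) ≤ n) :
    exp (-(D * log (log n))) ≤ α / (Kset n).card := by
  have hn' : 16 ≤ n := by exact_mod_cast hn
  have card_pos : (0 : ℝ) < (Kset n).card := by exact_mod_cast (Kset_nonempty n).card_pos
  have log_pos : 0 < log n := log_pos (by linarith)
  calc exp (-(D * log (log n))) ≤ α / 2 * exp (-log (log n)) :=
        exp_neg_mul_le hα hD (one_le_log_log hn)
    _ = α / (2 * log n) := by rw [exp_neg, exp_log log_pos]; field_simp
    _ ≤ α / (Kset n).card :=
        div_le_div_of_nonneg_left hα.1.le card_pos (card_Kset_le_two_mul_log (by omega))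

lemma sq_mul_sqrt_mul_le_of_div_sqrt_le {C x L N r : ℝ} (hC : 0 ≤ C) (hx : 0 ≤ x) (hN : 0 < N)
    (h : C * x ^ ((1 : ℝ) / 4) * √L / √N ≤ r) : C ^ 2 * √x * L ≤ N * r ^ 2 := by
  have quarter_sq : (x ^ ((1 : ℝ) / 4)) ^ 2 = √x := by
    rw [sqrt_eq_rpow, ← rpow_natCast, ← rpow_mul hx]; norm_num
  have le_sqrt_sq : L ≤ √L ^ 2 := by
    rcases le_total L 0 with hL | hL
    · exact hL.trans (sq_nonneg _)
    · rw [sq_sqrt hL]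
  calc C ^ 2 * √x * L ≤ C ^ 2 * √x * √L ^ 2 := by gcongr
    _ = N * (C * x ^ ((1 : ℝ) / 4) * √L / √N) ^ 2 := by
        rw [div_pow, mul_pow, mul_pow, quarter_sq, sq_sqrt hN.le]; field_simp
    _ ≤ N * r ^ 2 := by gcongr

lemma sqrt_div_two_mul_le_eighth {C D L M N r : ℝ} (hC : 0 < C) (hL : 0 < L) (hN : 0 < N)
    (hr : C ^ 2 * L ≤ N * r ^ 2) (hrM : r ^ 2 ≤ M ^ 2) (hMC : 32 * D * M ^ 2 ≤ C ^ 2) :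
    √(D * L / (2 * N)) ≤ 1 / 8 := by
  have signal_le : C ^ 2 * L ≤ N * M ^ 2 := hr.trans (by gcongr)
  have M_sq_pos : 0 < M ^ 2 :=
    pos_of_mul_pos_right ((by positivity : 0 < C ^ 2 * L).trans_le signal_le) hN.le
  have : 32 * D * L ≤ N := by
    refine le_of_mul_le_mul_right ?_ M_sq_pos
    linarith [mul_le_mul_of_nonneg_right hMC hL.le]
  rw [sqrt_le_left (by norm_num), div_le_iff₀ (by positivity)]
  linarith

lemma two_mul_sqrt_div_le {β c C D L N : ℝ} (hβ : 0 ≤ β) (hc : 0 ≤ c) (hD : 0 ≤ D) (hL : 0 ≤ L)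
    (hN : 0 < N) (h : 96 * D ≤ c ^ 2 * β * C ^ 2) :
    2 * √(D * L / (2 * N)) ≤ √(β * (C ^ 2 * L) / (48 * N)) * c := by
  refine (sq_le_sq₀ (by positivity) (by positivity)).1 ?_
  rw [mul_pow, mul_pow, sq_sqrt (by positivity), sq_sqrt (by positivity)]
  calc 2 ^ 2 * (D * L / (2 * N)) = 96 * D * (L / (48 * N)) := by ring
    _ ≤ c ^ 2 * β * C ^ 2 * (L / (48 * N)) := by gcongr
    _ = β * (C ^ 2 * L) / (48 * N) * c ^ 2 := by ring

end Calibration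

section Separation

variable {d n : ℕ} {M α β ε c C D : ℝ} {μ : EuclideanSpace ℝ (Fin d)}

lemma splitLaw_mixMeasure_compl_rejRegion2_le (hd : d ≠ 0) (hα : α ∈ Set.Ioo (0 : ℝ) 1)
    (hβ : β ∈ Set.Ioc (0 : ℝ) 1) (hε : ε ∈ Set.Ioc (0 : ℝ) 1) (hμ : ‖μ‖ ≤ M)
    (hc : 0 < c) (hgain : ∀ t,
      (gaussianReal 0 1).real (Set.Ioi t) ∈ Set.Icc (1 / 8 : ℝ) (1 / 2) → ∀ m ∈ Set.Icc 0 M,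
      (gaussianReal 0 1).real (Set.Ioi t) + m * c ≤ (gaussianReal m 1).real (Set.Ioi t))
    (hDα : 2 / α ≤ D) (hDβ : 2 / β ≤ D) (hC : 16 ≤ C) (hβC : 32 ≤ β * C)
    (hcC : 96 * D ≤ c ^ 2 * β * C ^ 2) (hMC : 32 * D * M ^ 2 ≤ C ^ 2)
    (hr : C ^ 2 * √d * log (log n) ≤ n * (ε * ‖μ‖) ^ 2) (hnε : C ≤ n * ε) :
    splitLaw n (mixMeasure d ε μ) (rejRegion2 d n α)ᶜ ≤ ENNReal.ofReal β := by
  set L := log (log n)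
  set s := √(D * L / (2 * n))
  have hβ0 := hβ.1
  have n_ge : (16 : ℝ) ≤ n := by nlinarith [hε.2, (n.cast_nonneg : (0 : ℝ) ≤ n)]
  have L_ge : 1 ≤ L := one_le_log_log n_ge
  have D_pos : 0 < D := (div_pos two_pos hα.1).trans_le hDα
  have s_sq : s ^ 2 = D * L / (2 * n) := sq_sqrt (by positivity)
  have s_pos : 0 < s := sqrt_pos.2 (by positivity)
  have exponent : exp (-2 * n * s ^ 2) = exp (-(D * L)) := by
    rw [s_sq]; congr 1; field_simp
  have one_le_sqrt_d : 1 ≤ √d := by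
    rw [one_le_sqrt]; exact_mod_cast Nat.one_le_iff_ne_zero.2 hd
  have B_ge : 16 * C ≤ C ^ 2 * L := by nlinarith
  have s_le : s ≤ 1 / 8 := by
    refine sqrt_div_two_mul_le_eighth (by linarith) (by linarith) (by linarith)
      (r := ε * ‖μ‖) (le_trans ?_ hr) ?_ hMC
    · nlinarith [mul_le_mul_of_nonneg_left one_le_sqrt_d (by positivity : 0 ≤ C ^ 2 * L)]
    · have := hε.1
      gcongr
      exact (mul_le_of_le_one_left (norm_nonneg μ) hε.2).trans hμ
  have hn : 2 ≤ n := by exact_mod_cast (by linarith : (2 : ℝ) ≤ n)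
  have direction := pi_mixMeasure_inner_empDirection_lt_le (B := C ^ 2 * L) μ hd hε hβ0
    (by linarith) (by nlinarith) (by linarith) (by linarith) (hβC.trans (by gcongr))
  have false_alarm := exp_neg_mul_log_log_le_div_card_Kset ⟨hα.1, hα.2.le⟩ hDα n_ge
  have miss : exp (-(D * L)) ≤ β / 2 := (exp_neg_mul_le hβ hDβ L_ge).trans
    (mul_le_of_le_one_right (by linarith) (exp_le_one_iff.2 (by linarith)))
  have := isProbabilityMeasure_mixMeasure μ ⟨hε.1.le, hε.2⟩
  calc splitLaw n (mixMeasure d ε μ) (rejRegion2 d n α)ᶜ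
      ≤ _ + ENNReal.ofReal (exp (-2 * n * s ^ 2)) :=
        splitLaw_mixMeasure_compl_rejRegion2_le_add hn hα ⟨hε.1.le, hε.2⟩ hμ hc hgain
          ⟨s_pos, s_le⟩ (exponent ▸ false_alarm)
          (two_mul_sqrt_div_le hβ0.le hc.le D_pos.le (by linarith) (by linarith) hcC)
    _ ≤ ENNReal.ofReal (β / 2) + ENNReal.ofReal (β / 2) :=
        add_le_add
          ((ENNReal.le_ofReal_iff_toReal_le (measure_ne_top _ _) (by linarith)).2 direction)
          (ENNReal.ofReal_le_ofReal (exponent ▸ miss))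
    _ = ENNReal.ofReal β := by
        rw [← ENNReal.ofReal_add (by linarith) (by linarith), add_halves]

lemma exists_splitLaw_mixMeasure_compl_rejRegion2_le (M : ℝ) (hα : α ∈ Set.Ioo (0 : ℝ) 1)
    (hβ : β ∈ Set.Ioc (0 : ℝ) 1) :
    ∃ C > 0, ∀ (d n : ℕ) (ε : ℝ) (μ : EuclideanSpace ℝ (Fin d)), d ≠ 0 →
      ε ∈ Set.Ioc (0 : ℝ) 1 → ‖μ‖ ≤ M →
      C ^ 2 * √d * log (log n) ≤ n * (ε * ‖μ‖) ^ 2 → C ≤ n * ε →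
      splitLaw n (mixMeasure d ε μ) (rejRegion2 d n α)ᶜ ≤ ENNReal.ofReal β := by
  obtain ⟨c, hc, hgain⟩ := exists_measureReal_Ioi_add_mul_le_gaussianReal M
    (a := 1 / 8) (b := 1 / 2) (by norm_num) (by norm_num)
  obtain ⟨D, hDα, hDβ⟩ : ∃ D, 2 / α ≤ D ∧ 2 / β ≤ D := ⟨_, le_max_left _ _, le_max_right _ _⟩
  have sq_atTop : Tendsto (fun C : ℝ => C ^ 2) atTop atTop := tendsto_pow_atTop two_ne_zero
  have := hβ.1
  have hcβ : 0 < c ^ 2 * β := by positivity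
  obtain ⟨C, hC, hβC, hcC, hMC⟩ := ((eventually_ge_atTop 16).and
    (((tendsto_id.const_mul_atTop hβ.1).eventually_ge_atTop 32).and
      (((sq_atTop.const_mul_atTop hcβ).eventually_ge_atTop (96 * D)).and
        (sq_atTop.eventually_ge_atTop (32 * D * M ^ 2))))).exists
  exact ⟨C, by linarith, fun d n ε μ hd hε hμ hr hnε =>
    splitLaw_mixMeasure_compl_rejRegion2_le hd hα hβ hε hμ hc hgain hDα hDβ hC hβC hcC hMC hr hnε⟩

end Separation

end

/-- **Theorem (second testing procedure for `F₂[M]`).**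
The projected order-statistics test `Ψ₂` is of level `α`, and there is a positive
constant `C(α,β,M)` depending only on `α, β, M` such that `P_f(Ψ₂ = 0) ≤ β` for every
`f_{(ε,μ)} ∈ F₂[M]` with `ε‖μ‖ ≥ C(α,β,M)·d^{1/4}·√(ln ln n)/√n` and `n·ε ≥ C(α,β,M)`. -/
theorem upperBound_orderStat_test (M α β : ℝ) (hM : 0 < M)
    (hα : α ∈ Set.Ioo (0 : ℝ) 1) (hβ : β ∈ Set.Ioo (0 : ℝ) 1) :
    (∀ d n : ℕ, 1 ≤ d → 2 ≤ n →
      splitLaw n (gaussMeasure d) (rejRegion2 d n α) ≤ ENNReal.ofReal α) ∧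
    ∃ C : ℝ, 0 < C ∧ ∀ d n : ℕ, 1 ≤ d → 2 ≤ n →
      ∀ (ε : ℝ) (μ : EuclideanSpace ℝ (Fin d)), ε ∈ Set.Ioo (0 : ℝ) 1 → ‖μ‖ ≤ M →
        C * (d : ℝ) ^ ((1 : ℝ) / 4) * Real.sqrt (Real.log (Real.log n)) / Real.sqrt n
          ≤ ε * ‖μ‖ →
        C ≤ n * ε →
        splitLaw n (mixMeasure d ε μ) (rejRegion2 d n α)ᶜ ≤ ENNReal.ofReal β := by
  refine ⟨fun d n hd hn => splitLaw_gaussMeasure_rejRegion2_le (by omega) hn hα, ?_⟩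
  obtain ⟨C, hC, power⟩ := exists_splitLaw_mixMeasure_compl_rejRegion2_le M hα ⟨hβ.1, hβ.2.le⟩
  exact ⟨C, hC, fun d n hd hn ε μ hε hμ hr hnε =>
    power d n ε μ (by omega) ⟨hε.1, hε.2.le⟩ hμ
      (sq_mul_sqrt_mul_le_of_div_sqrt_le hC.le d.cast_nonneg (by positivity) hr) hnε⟩

end
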